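/- Let K be a number field and S a finite set of places of K containing all the archimedean ones. Let Q₁, Q₂, Q₃ be three distinct points in ℙ¹(K). Given any fixed choice of nonnegative integers n_{i,𝔭} for each i ∈ {1,2,3} and each prime 𝔭 ∉ S, the set { P ∈ ℙ¹(K) : δ_𝔭(P,Q_i) = n_{i,𝔭} for each i ∈ {1,2,3} and all 𝔭 ∉ S } has cardinality at most B(|S|) = 2^{16|S|}. -/

import Mathlib

open NumberField IsDedekindDomain MvPolynomial
open scoped Classical nonZeroDivisors

set_option synthInstance.maxHeartbeats 1000000
set_option maxHeartbeats 1000000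

noncomputable section

/-- The projective line over `K`. -/
abbrev P1 (K : Type*) [Field K] := Projectivization K (Fin 2 → K)

variable {K : Type*} [Field K] [NumberField K]

/-- The additive `v`-adic valuation (order) of `x ∈ K`, with junk value `0` at `x = 0`,
normalized so that it is surjective onto `ℤ`. -/
def ordAt (v : HeightOneSpectrum (𝓞 K)) (x : K) : ℤ :=
  if hx : x = 0 then 0
  else - Multiplicative.toAdd (WithZero.unzero ((v.valuation K).ne_zero_iff.mpr hx))

/-- `min (v(x), v(y))` for a pair of coordinates, not both zero. -/
def minOrd (v : HeightOneSpectrum (𝓞 K)) (x y : K) : ℤ :=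
  if x = 0 then ordAt v y else if y = 0 then ordAt v x else min (ordAt v x) (ordAt v y)

/-- The `v`-adic logarithmic distance between two points of `ℙ¹(K)`:
`δ_v(P,Q) = v(x₁y₂ - x₂y₁) - min(v x₁, v y₁) - min(v x₂, v y₂)`, with value `⊤` when `P = Q`
(it is independent of the choice of homogeneous coordinates, so we compute it on the chosen
representatives). -/
def logDist (v : HeightOneSpectrum (𝓞 K)) (P Q : P1 K) : WithTop ℤ :=
  if P = Q then ⊤
  else ((ordAt v (P.rep 0 * Q.rep 1 - P.rep 1 * Q.rep 0)
        - minOrd v (P.rep 0) (P.rep 1) - minOrd v (Q.rep 0) (Q.rep 1) : ℤ) : WithTop ℤ)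

/-- An endomorphism of `ℙ¹` of degree `d` defined over `K`, given by a pair of homogeneous
forms of degree `d` with no common zero over the algebraic closure, together with the induced
self-map of `ℙ¹(K)`. -/
structure P1Map (K : Type*) [Field K] (d : ℕ) where
  toFun : P1 K → P1 K
  F : MvPolynomial (Fin 2) K
  G : MvPolynomial (Fin 2) K
  homF : F.IsHomogeneous d
  homG : G.IsHomogeneous d
  coprime : ∀ x y : AlgebraicClosure K,
    aeval ![x, y] F = 0 → aeval ![x, y] G = 0 → x = 0 ∧ y = 0
  compat : ∀ (x y : K) (hxy : ![x, y] ≠ 0)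
    (h : ![eval ![x, y] F, eval ![x, y] G] ≠ 0),
    toFun (Projectivization.mk K ![x, y] hxy) =
      Projectivization.mk K ![eval ![x, y] F, eval ![x, y] G] h

variable {d : ℕ}

/-- `φ` has good reduction at the finite place `v`: some representing pair of forms has
coefficients in the valuation ring at `v`, not all in the maximal ideal, and the reductions
of the two forms modulo `v` have no common zero in `ℙ¹` of the algebraic closure of the
residue field. -/
def GoodReductionAt (φ : P1Map K d) (v : HeightOneSpectrum (𝓞 K)) : Prop :=
  ∃ c : K, c ≠ 0 ∧
    ∃ F₀ G₀ : MvPolynomial (Fin 2) (v.valuation (K := K)).valuationSubring,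
      MvPolynomial.map ((v.valuation (K := K)).valuationSubring.subtype) F₀ = C c * φ.F ∧
      MvPolynomial.map ((v.valuation (K := K)).valuationSubring.subtype) G₀ = C c * φ.G ∧
      ((∃ m, F₀.coeff m ∉ IsLocalRing.maximalIdeal (v.valuation (K := K)).valuationSubring) ∨
        (∃ m, G₀.coeff m ∉ IsLocalRing.maximalIdeal (v.valuation (K := K)).valuationSubring)) ∧
      ∀ x y : AlgebraicClosure
          (IsLocalRing.ResidueField (v.valuation (K := K)).valuationSubring),
        eval ![x, y] (MvPolynomial.map
          ((algebraMap (IsLocalRing.ResidueField (v.valuation (K := K)).valuationSubring)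
              (AlgebraicClosure _)).comp
            (IsLocalRing.residue _)) F₀) = 0 →
        eval ![x, y] (MvPolynomial.map
          ((algebraMap (IsLocalRing.ResidueField (v.valuation (K := K)).valuationSubring)
              (AlgebraicClosure _)).comp
            (IsLocalRing.residue _)) G₀) = 0 →
        x = 0 ∧ y = 0

/-- `φ` has good reduction outside `S`, where `S` consists of all archimedean places together
with the finite places in `T`. -/
def GoodReductionOutside (φ : P1Map K d) (T : Finset (HeightOneSpectrum (𝓞 K))) : Prop :=
  ∀ v ∉ T, GoodReductionAt φ v

/-- `P` is a periodic point of `φ`. -/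
def IsPeriodicPoint (φ : P1Map K d) (P : P1 K) : Prop :=
  ∃ n, 0 < n ∧ φ.toFun^[n] P = P

/-- `P` is a preperiodic point of `φ`. -/
def IsPreperiodicPoint (φ : P1Map K d) (P : P1 K) : Prop :=
  ∃ m, IsPeriodicPoint φ (φ.toFun^[m] P)

/-- `P` is a tail point of `φ`: preperiodic but not periodic. -/
def IsTailPoint (φ : P1Map K d) (P : P1 K) : Prop :=
  IsPreperiodicPoint φ P ∧ ¬ IsPeriodicPoint φ P

/-- The set `Tail(φ,K,P)` of `K`-rational tail points of `P`: non-periodic points having `P`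
in their forward orbit. -/
def TailOf (φ : P1Map K d) (P : P1 K) : Set (P1 K) :=
  {Q | ¬ IsPeriodicPoint φ Q ∧ ∃ n, φ.toFun^[n] Q = P}

/-- `P = [a:b]` is a critical point of `φ = [F:G]`: the algebraic condition
`φ([x:y]) = φ([a:b])`, i.e. the form `G(a,b)·F(X,Y) - F(a,b)·G(X,Y)`, vanishes to order
at least `2` at `[a:b]`. -/
def IsCriticalPt (φ : P1Map K d) (P : P1 K) : Prop :=
  ∃ (a b : K) (hab : ![a, b] ≠ 0), P = Projectivization.mk K ![a, b] hab ∧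
    (C b * X 0 - C a * X 1) ^ 2 ∣
      (C (eval ![a, b] φ.G) * φ.F - C (eval ![a, b] φ.F) * φ.G)

/-- `P` belongs to a critical cycle of `φ`: it lies in the orbit of a critical periodic
point. -/
def InCriticalCycle (φ : P1Map K d) (P : P1 K) : Prop :=
  ∃ Q, IsCriticalPt φ Q ∧ IsPeriodicPoint φ Q ∧ ∃ n, φ.toFun^[n] Q = P

/-- The cardinality `|S|` of the set of places `S` consisting of all archimedean places
together with the finite places in `T`. -/
def sCard (K : Type*) [Field K] [NumberField K] (T : Finset (HeightOneSpectrum (𝓞 K))) : ℕ :=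
  T.card + Fintype.card (InfinitePlace K)

/-- `B(s) = 2^{16 s}`. -/
def Bconst (s : ℕ) : ℕ := 2 ^ (16 * s)

/-- `C(n,s) = e^{(6n)^{3n} (n s + 1 - n)}`. -/
def Cconst (n s : ℕ) : ℝ := Real.exp ((6 * n : ℝ) ^ (3 * n) * (n * s + 1 - n))

/-- `CV(d,s) = (3B(s)+13)d + 27B(s) + C(5,s) + 6C(3,s) + 32`. -/
def CVconst (d s : ℕ) : ℝ :=
  (3 * (Bconst s : ℝ) + 13) * d + 27 * (Bconst s : ℝ) + Cconst 5 s + 6 * Cconst 3 s + 32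

/-- `L₁(d,s) = (d-1)(1 + d(1 + B(s)))`. -/
def L1const (d s : ℕ) : ℕ := (d - 1) * (1 + d * (1 + Bconst s))

/-- `L₂(d,s) = max{(2(C(3,s)+2)+1)d + 1, (d-1)(1 + B(s)(B(s) + C(3,s) + 3))}`. -/
def L2const (d s : ℕ) : ℝ :=
  max ((2 * (Cconst 3 s + 2) + 1) * d + 1)
    (((d : ℝ) - 1) * (1 + (Bconst s : ℝ) * ((Bconst s : ℝ) + Cconst 3 s + 3)))

/-- `L₃(d,s) = ((1 + 3B(s))B(s) + 1)(d-1)`. -/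
def L3const (d s : ℕ) : ℕ := ((1 + 3 * Bconst s) * Bconst s + 1) * (d - 1)

/-- `L₄(d,s) = (C(3,s) + 3)(d-1)`. -/
def L4const (d s : ℕ) : ℝ := (Cconst 3 s + 3) * ((d : ℝ) - 1)

end

/-!
In the coordinate `z` on `ℙ¹` that sends the three given points to `0`, `1`, `∞`, the prescribed
distances fix `|z|_v` and `|1 - z|_v` at every place `v` outside `S`. Each solution is recorded by a
triangle in `K` with sides `z`, `1 - z`, `-1`, which are `U`-units for a common finite set `U` of
places. The height of a triangle is, up to an error term, a third of its total spread: the sum over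
the places of the logarithm of the ratio between its longest and its shortest side.

The residues of `ℓ dX / ∏ (X - aⱼ) ^ (N + 1)`, for `ℓ` of degree at most one, at the vertices of a
triangle `a` sum to zero, as do the sides of a second triangle `b`. After clearing denominators, a
determinant formed from two of these residues and two of these sides is `U`-integral, and for some
`ℓ = X - aₖ` it does not vanish: otherwise a nonzero `ℓ` would have all residues zero, which its
degree forbids. If the shortest sides of `a` and `b` have the same index at `v`, this determinant is
`v`-adically small, of order the `(2N + 1)`-st power of the shortest side of `a` or the shortest
side of `b`, whichever is larger. The product formula then bounds
`∑ᵥ min ((2N + 1) spreadᵥ a) (spreadᵥ b)` by `(3N + 2) h(a) + h(b)` plus an error linear in `N`.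

Divide the large triangles into cells according to the shortest side at each place and to the
distribution of the total spread over `S`, rounded to a twentieth of the average: there are at most
`(3 · 56) ^ |S|` cells. Inside a cell, the left hand side above is nearly the minimum of
`(2N + 1) ∑ spread a` and `∑ spread b`. Taking `N` about half the ratio of the two totals shows that
this ratio is less than `20`, once the totals exceed a multiple of the error term, while the same
argument with the sides of `a` in place of the residues shows that it is at least `29/25`. Hence a
cell contains at most `42` triangles. Two triangles of small height are separated by the positions
of `[z : 1 - z]` on the projective lines at the archimedean places, each of which is divided into
`2 · 129²` cells.
-/

noncomputable section

open scoped Polynomial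

section Residues

variable {K ι : Type*} [Field K] [Fintype ι] [DecidableEq ι]

/-- The power series expansion of `1 / (X + u) ^ (N + 1)`, for `u ≠ 0`. -/
def invPow (N : ℕ) (u : K) : PowerSeries K :=
  PowerSeries.mk fun k => (-1) ^ k * ((N + k).choose N : K) * u⁻¹ ^ (N + 1 + k)

theorem coeff_invPow (N k : ℕ) (u : K) :
    PowerSeries.coeff k (invPow N u) =
      (-1) ^ k * ((N + k).choose N : K) * u⁻¹ ^ (N + 1 + k) :=
  PowerSeries.coeff_mk _ _

theorem invPow_mul_X_add_C_pow (N : ℕ) {u : K} (hu : u ≠ 0) :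
    invPow N u * (PowerSeries.X + PowerSeries.C u) ^ (N + 1) = 1 := by
  have hbinom : PowerSeries.mk (fun k => ((N + k).choose N : K)) *
      (1 - PowerSeries.X) ^ (N + 1) = 1 := by
    rw [← PowerSeries.invOneSubPow_val_succ_eq_mk_add_choose,
      ← PowerSeries.invOneSubPow_inv_eq_one_sub_pow]
    exact Units.val_inv _
  have hrescale := congrArg (PowerSeries.rescale (-u⁻¹)) hbinom
  rw [map_mul, map_pow, map_sub, map_one, PowerSeries.rescale_X] at hrescale
  have hlin : (PowerSeries.X + PowerSeries.C u : PowerSeries K) =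
      PowerSeries.C u * (1 - PowerSeries.C (-u⁻¹) * PowerSeries.X) := by
    rw [mul_sub, ← mul_assoc, ← map_mul, mul_neg, mul_inv_cancel₀ hu, map_neg, map_one]
    ring
  have hinv : invPow N u = PowerSeries.C (u⁻¹ ^ (N + 1)) *
      PowerSeries.rescale (-u⁻¹) (PowerSeries.mk fun k => ((N + k).choose N : K)) := by
    ext k
    rw [coeff_invPow, PowerSeries.coeff_C_mul, PowerSeries.coeff_rescale, PowerSeries.coeff_mk,
      neg_pow u⁻¹ k]
    ring
  rw [hlin, hinv, mul_pow, ← map_pow, mul_mul_mul_comm, hrescale, ← map_mul, ← mul_pow,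
    inv_mul_cancel₀ hu, one_pow, map_one, mul_one]

/-- The expansion of `ℓ / ∏ j ≠ i, (X - a j) ^ (N + 1)` in powers of `X - a i`. -/
def localSeries (a : ι → K) (N : ℕ) (i : ι) (ℓ : K[X]) : PowerSeries K :=
  (Polynomial.taylor (a i) ℓ : PowerSeries K) * ∏ j ∈ Finset.univ.erase i, invPow N (a i - a j)

/-- The residue of the differential `ℓ dX / ∏ j, (X - a j) ^ (N + 1)` at `a i`, as a linear
function of `ℓ`. -/
def residue (a : ι → K) (N : ℕ) (i : ι) : K[X] →ₗ[K] K where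
  toFun ℓ := PowerSeries.coeff N (localSeries a N i ℓ)
  map_add' p q := by simp [localSeries, add_mul]
  map_smul' c p := by simp [localSeries]

theorem residue_apply (a : ι → K) (N : ℕ) (i : ι) (ℓ : K[X]) :
    residue a N i ℓ = PowerSeries.coeff N (localSeries a N i ℓ) :=
  rfl

/-- The polynomial `P` of degree at most `N` for which `P / (X - a i) ^ (N + 1)` is the principal
part of `ℓ / ∏ j, (X - a j) ^ (N + 1)` at `a i`. -/
def principalPart (a : ι → K) (N : ℕ) (i : ι) (ℓ : K[X]) : K[X] :=
  Polynomial.taylor (-a i) (PowerSeries.trunc (N + 1) (localSeries a N i ℓ))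

theorem localSeries_mul_nodal {a : ι → K} (ha : Function.Injective a) (N : ℕ) (i : ι) (ℓ : K[X]) :
    localSeries a N i ℓ *
      (Polynomial.taylor (a i) (Lagrange.nodal (Finset.univ.erase i) a ^ (N + 1)) : K[X]) =
        (Polynomial.taylor (a i) ℓ : K[X]) := by
  have hnodal : ((Polynomial.taylor (a i)
      (Lagrange.nodal (Finset.univ.erase i) a ^ (N + 1)) : K[X]) : PowerSeries K) =
        ∏ j ∈ Finset.univ.erase i, (PowerSeries.X + PowerSeries.C (a i - a j)) ^ (N + 1) := by
    rw [Lagrange.nodal_eq, ← Finset.prod_pow, ← Polynomial.taylorAlgHom_apply, map_prod,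
      ← Polynomial.coeToPowerSeries.ringHom_apply, map_prod]
    refine Finset.prod_congr rfl fun j _ => ?_
    simp [Polynomial.taylor_pow, add_sub_assoc]
  rw [localSeries, hnodal, mul_assoc, ← Finset.prod_mul_distrib,
    Finset.prod_eq_one fun j hj => invPow_mul_X_add_C_pow N
      (sub_ne_zero.mpr (ha.ne (Finset.ne_of_mem_erase hj).symm)), mul_one]

theorem X_pow_dvd_trunc_mul_sub {n : ℕ} {g : PowerSeries K} {e ℓ : K[X]}
    (h : g * (e : PowerSeries K) = ℓ) :
    Polynomial.X ^ n ∣ PowerSeries.trunc n g * e - ℓ := by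
  rw [Polynomial.X_pow_dvd_iff]
  intro d hd
  have hcoeff := congrArg (Polynomial.coeff · d)
    ((PowerSeries.trunc_trunc_mul (n := n) g (e : PowerSeries K)).trans (by rw [h]))
  simp only [PowerSeries.coeff_trunc, if_pos hd, ← Polynomial.coe_mul,
    Polynomial.coeff_coe] at hcoeff
  rw [Polynomial.coeff_sub, hcoeff, sub_self]

theorem X_sub_C_pow_dvd_principalPart_mul_sub {a : ι → K} (ha : Function.Injective a) (N : ℕ)
    (i : ι) (ℓ : K[X]) :
    (Polynomial.X - Polynomial.C (a i)) ^ (N + 1) ∣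
      principalPart a N i ℓ * Lagrange.nodal (Finset.univ.erase i) a ^ (N + 1) - ℓ := by
  have h := map_dvd (Polynomial.taylorAlgHom (-a i))
    (X_pow_dvd_trunc_mul_sub (n := N + 1) (localSeries_mul_nodal ha N i ℓ))
  simpa [principalPart, Polynomial.taylor_taylor, Polynomial.taylor_mul, Polynomial.taylor_pow,
    ← sub_eq_add_neg] using h

theorem natDegree_principalPart_le (a : ι → K) (N : ℕ) (i : ι) (ℓ : K[X]) :
    (principalPart a N i ℓ).natDegree ≤ N := by
  rw [principalPart, Polynomial.natDegree_taylor]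
  exact Nat.lt_succ_iff.mp (PowerSeries.natDegree_trunc_lt _ N)

theorem coeff_principalPart (a : ι → K) (N : ℕ) (i : ι) (ℓ : K[X]) :
    (principalPart a N i ℓ).coeff N = residue a N i ℓ := by
  set q := PowerSeries.trunc (N + 1) (localSeries a N i ℓ) with hq
  have hdeg : q.natDegree ≤ N := Nat.lt_succ_iff.mp (PowerSeries.natDegree_trunc_lt _ N)
  have hcoeff : q.coeff N = residue a N i ℓ := by
    rw [hq, PowerSeries.coeff_trunc, if_pos N.lt_succ_self, residue_apply]
  rw [← hcoeff, principalPart, ← hq]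
  rcases hdeg.eq_or_lt with h | h
  · rw [← h, Polynomial.coeff_taylor_natDegree]
    rfl
  · rw [Polynomial.coeff_eq_zero_of_natDegree_lt h,
      Polynomial.coeff_eq_zero_of_natDegree_lt (by rwa [Polynomial.natDegree_taylor])]

theorem degree_principalPart_lt {a : ι → K} {N : ℕ} {i : ι} {ℓ : K[X]}
    (h : residue a N i ℓ = 0) : (principalPart a N i ℓ).degree < N := by
  rw [Polynomial.degree_lt_iff_coeff_zero]
  intro m hm
  rcases hm.eq_or_lt with rfl | hlt
  · rw [coeff_principalPart, h]
  · exact Polynomial.coeff_eq_zero_of_natDegree_lt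
      ((natDegree_principalPart_le a N i ℓ).trans_lt hlt)

theorem natDegree_nodal_erase (a : ι → K) (i : ι) :
    (Lagrange.nodal (Finset.univ.erase i) a).natDegree = Fintype.card ι - 1 := by
  rw [Lagrange.natDegree_nodal, Finset.card_erase_of_mem (Finset.mem_univ i), Finset.card_univ]

theorem sum_principalPart_mul_nodal {a : ι → K} (ha : Function.Injective a) {N : ℕ} {ℓ : K[X]}
    (hℓ : ℓ.natDegree < Fintype.card ι * (N + 1)) :
    ∑ i, principalPart a N i ℓ * Lagrange.nodal (Finset.univ.erase i) a ^ (N + 1) = ℓ := by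
  rw [← sub_eq_zero]
  have hdvd : Lagrange.nodal Finset.univ a ^ (N + 1) ∣
      (∑ i, principalPart a N i ℓ * Lagrange.nodal (Finset.univ.erase i) a ^ (N + 1)) - ℓ := by
    rw [Lagrange.nodal_eq, ← Finset.prod_pow]
    refine Finset.prod_dvd_of_coprime (fun i _ j _ hij => IsCoprime.pow
      (Polynomial.isCoprime_X_sub_C_of_isUnit_sub (sub_ne_zero.mpr (ha.ne hij)).isUnit))
      fun i _ => ?_
    rw [← Finset.add_sum_erase _ _ (Finset.mem_univ i), add_sub_right_comm]
    refine dvd_add (X_sub_C_pow_dvd_principalPart_mul_sub ha N i ℓ) (Finset.dvd_sum fun j hj => ?_)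
    refine Dvd.dvd.mul_left (pow_dvd_pow_of_dvd ?_ _) _
    rw [Lagrange.nodal_eq]
    exact Finset.dvd_prod_of_mem _
      (Finset.mem_erase.mpr ⟨(Finset.ne_of_mem_erase hj).symm, Finset.mem_univ i⟩)
  refine Polynomial.eq_zero_of_dvd_of_natDegree_lt hdvd ?_
  have hpos : 0 < Fintype.card ι := Nat.pos_of_mul_pos_right (Nat.zero_lt_of_lt hℓ)
  rw [Lagrange.nodal_monic.natDegree_pow, Lagrange.natDegree_nodal, Finset.card_univ, mul_comm]
  refine (Polynomial.natDegree_sub_le _ _).trans_lt (max_lt ?_ hℓ)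
  refine (Polynomial.natDegree_sum_le_of_forall_le _ _ fun i _ =>
    Polynomial.natDegree_mul_le_of_le (natDegree_principalPart_le a N i ℓ)
      (Polynomial.natDegree_pow_le_of_le _ (natDegree_nodal_erase a i).le)).trans_lt ?_
  obtain ⟨d, hd⟩ := Nat.exists_eq_add_of_le' hpos
  rw [hd, Nat.add_sub_cancel]
  linarith

theorem sum_residue_eq_zero {a : ι → K} (ha : Function.Injective a) {N : ℕ} {ℓ : K[X]}
    (hℓ : ℓ.natDegree + 1 < Fintype.card ι * (N + 1)) :
    ∑ i, residue a N i ℓ = 0 := by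
  obtain ⟨d, hd⟩ : ∃ d, Fintype.card ι = d + 1 :=
    Nat.exists_eq_add_of_le' (Nat.pos_of_mul_pos_right (Nat.zero_lt_of_lt hℓ))
  have hcoeff (i : ι) : (principalPart a N i ℓ *
      Lagrange.nodal (Finset.univ.erase i) a ^ (N + 1)).coeff (N + (N + 1) * d) =
        residue a N i ℓ := by
    have hmonic : (Lagrange.nodal (Finset.univ.erase i) a ^ (N + 1)).Monic :=
      Lagrange.nodal_monic.pow _
    have hdeg : (Lagrange.nodal (Finset.univ.erase i) a ^ (N + 1)).natDegree = (N + 1) * d := by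
      rw [Lagrange.nodal_monic.natDegree_pow, natDegree_nodal_erase, hd, Nat.add_sub_cancel]
    rw [Polynomial.coeff_mul_add_eq_of_natDegree_le (natDegree_principalPart_le a N i ℓ) hdeg.le,
      coeff_principalPart, ← hdeg, hmonic.coeff_natDegree, mul_one]
  simp_rw [← hcoeff]
  rw [← Polynomial.finsetSum_coeff, sum_principalPart_mul_nodal ha (Nat.lt_of_succ_lt hℓ)]
  refine Polynomial.coeff_eq_zero_of_natDegree_lt ?_
  rw [hd] at hℓ
  linarith

theorem coeff_X_mul_derivative (f : K[X]) (m : ℕ) :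
    (Polynomial.X * f.derivative).coeff m = m * f.coeff m := by
  cases m with
  | zero => simp
  | succ m => rw [Polynomial.coeff_X_mul, Polynomial.coeff_derivative]; push_cast; ring

theorem derivative_taylor (c : K) (f : K[X]) :
    (Polynomial.taylor c f).derivative = Polynomial.taylor c f.derivative := by
  simp [Polynomial.taylor_apply, Polynomial.derivative_comp]

section CharZero

variable [CharZero K]

theorem exists_X_mul_derivative_sub {N : ℕ} {r : K[X]} (hr : r.degree < N) :
    ∃ Q : K[X], Q.degree < N ∧ Polynomial.X * Q.derivative - Polynomial.C (N : K) * Q = r := by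
  set Q : K[X] := ∑ m ∈ Finset.range N, Polynomial.monomial m (r.coeff m / ((m : K) - N)) with hQ
  have hcoeff (m : ℕ) : Q.coeff m = if m < N then r.coeff m / ((m : K) - N) else 0 := by
    simp [hQ, Polynomial.finsetSum_coeff, Polynomial.coeff_monomial]
  refine ⟨Q, (Polynomial.degree_lt_iff_coeff_zero _ _).mpr fun m hm => ?_, ?_⟩
  · rw [hcoeff, if_neg hm.not_gt]
  · ext m
    rw [Polynomial.coeff_sub, coeff_X_mul_derivative, Polynomial.coeff_C_mul, ← sub_mul, hcoeff]
    split_ifs with hm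
    · exact mul_div_cancel₀ _ (sub_ne_zero.mpr (Nat.cast_injective.ne hm.ne))
    · rw [mul_zero, (Polynomial.degree_lt_iff_coeff_zero _ _).mp hr m (not_lt.mp hm)]

theorem exists_X_sub_C_mul_derivative_sub (c : K) {N : ℕ} {r : K[X]} (hr : r.degree < N) :
    ∃ Q : K[X], Q.degree < N ∧
      (Polynomial.X - Polynomial.C c) * Q.derivative - Polynomial.C (N : K) * Q = r := by
  obtain ⟨Q, hQ, hQr⟩ := exists_X_mul_derivative_sub (r := Polynomial.taylor c r)
    (by rwa [Polynomial.degree_taylor])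
  refine ⟨Polynomial.taylor (-c) Q, by rwa [Polynomial.degree_taylor], ?_⟩
  have h := congrArg (Polynomial.taylorAlgHom (-c)) hQr
  simpa [-map_natCast, Polynomial.taylor_taylor, Polynomial.taylor_mul, derivative_taylor,
    ← sub_eq_add_neg] using h

theorem eq_zero_of_natDegree_derivative_mul_sub {p G : K[X]} {N : ℕ} (hp : p.Monic)
    (hG : G.degree < (N * p.natDegree : ℕ))
    (h : (G.derivative * p - Polynomial.C (N : K) * G * p.derivative).natDegree + 1 <
      p.natDegree) :
    G = 0 := by
  by_contra hG0
  set E := G.derivative * p - Polynomial.C (N : K) * G * p.derivative with hE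
  have hXE : Polynomial.X * E = Polynomial.X * G.derivative * p -
      Polynomial.C (N : K) * (G * (Polynomial.X * p.derivative)) := by
    rw [hE]
    ring
  have hdeg (f : K[X]) : (Polynomial.X * f.derivative).natDegree ≤ f.natDegree :=
    Polynomial.natDegree_le_iff_coeff_eq_zero.mpr fun m hm => by
      rw [coeff_X_mul_derivative, Polynomial.coeff_eq_zero_of_natDegree_lt hm, mul_zero]
  have htop : (Polynomial.X * E).coeff (G.natDegree + p.natDegree) = 0 :=
    Polynomial.coeff_eq_zero_of_natDegree_lt <|
      (Polynomial.natDegree_mul_le_of_le Polynomial.natDegree_X_le le_rfl).trans_lt (by lia)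
  rw [hXE, Polynomial.coeff_sub, Polynomial.coeff_C_mul,
    Polynomial.coeff_mul_add_eq_of_natDegree_le (hdeg G) le_rfl,
    Polynomial.coeff_mul_add_eq_of_natDegree_le le_rfl (hdeg p), coeff_X_mul_derivative,
    coeff_X_mul_derivative, hp.coeff_natDegree] at htop
  have hfactor : G.leadingCoeff * ((G.natDegree : K) - (N * p.natDegree : ℕ)) = 0 := by
    rw [Polynomial.leadingCoeff]
    push_cast
    linear_combination htop
  refine (mul_ne_zero (Polynomial.leadingCoeff_ne_zero.mpr hG0) (sub_ne_zero.mpr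
    (Nat.cast_injective.ne ?_))) hfactor
  exact ((Polynomial.natDegree_lt_iff_degree_lt hG0).mpr hG).ne

-- With vanishing residues, `ℓ / ∏ j, (X - a j) ^ (N + 1)` is the derivative of a rational function
-- `G / ∏ j, (X - a j) ^ N`, whose order of vanishing at infinity contradicts that of `ℓ`.
theorem eq_zero_of_residue_eq_zero {a : ι → K} (ha : Function.Injective a) {N : ℕ} {ℓ : K[X]}
    (hℓ : ℓ.natDegree + 1 < Fintype.card ι) (h : ∀ i, residue a N i ℓ = 0) : ℓ = 0 := by
  choose Q hQdeg hQ using fun i =>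
    exists_X_sub_C_mul_derivative_sub (a i) (degree_principalPart_lt (h i))
  set e : ι → K[X] := fun i => Lagrange.nodal (Finset.univ.erase i) a with he
  set p := Lagrange.nodal Finset.univ a with hp
  set G := ∑ i, Q i * e i ^ N with hG
  have hpdeg : p.natDegree = Fintype.card ι := by
    rw [hp, Lagrange.natDegree_nodal, Finset.card_univ]
  have hprim : G.derivative * p - Polynomial.C (N : K) * G * p.derivative = ℓ := by
    rw [← sum_principalPart_mul_nodal ha (N := N) (ℓ := ℓ) (by nlinarith), hG,
      Polynomial.derivative_sum, Finset.sum_mul, Finset.mul_sum, Finset.sum_mul,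
      ← Finset.sum_sub_distrib]
    refine Finset.sum_congr rfl fun i _ => ?_
    rw [hp, Lagrange.nodal_eq_mul_nodal_erase (Finset.mem_univ i), ← hQ i,
      Polynomial.derivative_mul, Polynomial.derivative_mul, Polynomial.derivative_pow,
      Polynomial.derivative_X_sub_C]
    cases N with
    | zero => simp; ring
    | succ n => simp only [he, Nat.add_sub_cancel]; ring
  have hGdeg : G.degree < (N * p.natDegree : ℕ) := by
    refine Polynomial.mem_degreeLT.mp (Submodule.sum_mem _ fun i _ =>
      Polynomial.mem_degreeLT.mpr ?_)
    obtain ⟨d, hd⟩ : ∃ d, Fintype.card ι = d + 1 := Nat.exists_eq_add_of_le' (Nat.zero_lt_of_lt hℓ)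
    rw [Polynomial.degree_mul, Polynomial.degree_pow, he,
      Polynomial.degree_eq_natDegree Lagrange.nodal_ne_zero, natDegree_nodal_erase, hpdeg, hd,
      Nat.add_sub_cancel, mul_add_one, add_comm (N * d), Nat.cast_add, nsmul_eq_mul, ← Nat.cast_mul]
    exact WithBot.add_lt_add_right (WithBot.natCast_ne_bot _) (hQdeg i)
  rw [← hprim, eq_zero_of_natDegree_derivative_mul_sub Lagrange.nodal_monic hGdeg
    (by rwa [hprim, hpdeg])]
  simp

end CharZero

end Residues

section TriangleConstant

/-- The absolute value `f` satisfies the triangle inequality in the multiplicative form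
`f (x + y) ≤ A * max (f x) (f y)`: nonarchimedean absolute values do so with `A = 1`, all others
with `A = 2`. -/
def HasTriangleConst {R : Type*} [Semiring R] (f : AbsoluteValue R ℝ) (A : ℝ) : Prop :=
  ∀ x y, f (x + y) ≤ A * max (f x) (f y)

theorem hasTriangleConst_two {R : Type*} [Semiring R] (f : AbsoluteValue R ℝ) :
    HasTriangleConst f 2 := fun x y => by
  linarith [f.add_le x y, le_max_left (f x) (f y), le_max_right (f x) (f y)]

namespace HasTriangleConst

variable {R : Type*} [Ring R] {f : AbsoluteValue R ℝ} {A B : ℝ}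

theorem one_le [Nontrivial R] (h : HasTriangleConst f A) : 1 ≤ A := by
  simpa using h 1 0

theorem add_le (h : HasTriangleConst f A) (hA : 0 ≤ A) {x y : R} (hx : f x ≤ B) (hy : f y ≤ B) :
    f (x + y) ≤ A * B :=
  (h x y).trans (mul_le_mul_of_nonneg_left (max_le hx hy) hA)

theorem sum_le [Nontrivial R] (h : HasTriangleConst f A) {ι : Type*} {g : ι → R} (hB : 0 ≤ B)
    {r : ℕ} {s : Finset ι} (hs : s.card ≤ 2 ^ r) (hg : ∀ i ∈ s, f (g i) ≤ B) :
    f (∑ i ∈ s, g i) ≤ A ^ r * B := by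
  classical
  have hA : 0 ≤ A := zero_le_one.trans h.one_le
  induction r generalizing s with
  | zero =>
    rcases Nat.le_one_iff_eq_zero_or_eq_one.mp hs with hs | hs
    · simpa [Finset.card_eq_zero.mp hs] using hB
    · obtain ⟨i, rfl⟩ := Finset.card_eq_one.mp hs
      simpa using hg
  | succ r ih =>
    obtain ⟨t, hts, ht⟩ := Finset.exists_subset_card_eq (min_le_right (2 ^ r) s.card)
    rw [← Finset.sum_sdiff hts, pow_succ', mul_assoc]
    refine h.add_le hA (ih ?_ fun i hi => hg i (Finset.sdiff_subset hi))
      (ih (ht.trans_le (min_le_left _ _)) fun i hi => hg i (hts hi))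
    rw [Finset.card_sdiff_of_subset hts, ht]
    lia

theorem natCast_le [IsDomain R] (h : HasTriangleConst f A) {n r : ℕ}
    (hn : n ≤ 2 ^ r) : f (n : R) ≤ A ^ r := by
  simpa using h.sum_le (g := fun _ : ℕ => (1 : R)) (s := Finset.range n) zero_le_one
    (by simpa using hn) (by simp)

end HasTriangleConst

theorem pow_mul_inv_pow_add {K : Type*} [Field K] {u : K} (hu : u ≠ 0) {N k : ℕ} (hk : k ≤ N) :
    u ^ (2 * N + 1) * u⁻¹ ^ (N + 1 + k) = u ^ (N - k) := by
  rw [show 2 * N + 1 = (N - k) + (N + 1 + k) by lia, pow_add, mul_assoc, ← mul_pow,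
    mul_inv_cancel₀ hu, one_pow, mul_one]

theorem HasTriangleConst.apply_choose_mul_choose_le {R : Type*} [Ring R] [IsDomain R]
    {f : AbsoluteValue R ℝ} {A : ℝ} (h : HasTriangleConst f A) {N j k : ℕ} (hj : j ≤ N)
    (hk : k ≤ N) :
    f (((N + j).choose N : R) * ((N + k).choose N : R)) ≤ A ^ (4 * N) := by
  have hchoose {i : ℕ} (hi : i ≤ N) : f ((N + i).choose N : R) ≤ A ^ (2 * N) :=
    h.natCast_le ((Nat.choose_le_two_pow _ _).trans (Nat.pow_le_pow_right two_pos (by lia)))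
  calc f (((N + j).choose N : R) * ((N + k).choose N : R))
      ≤ A ^ (2 * N) * A ^ (2 * N) := by
        rw [map_mul]
        exact mul_le_mul (hchoose hj) (hchoose hk) (f.nonneg _)
          (pow_nonneg (zero_le_one.trans h.one_le) _)
    _ = A ^ (4 * N) := by ring

theorem HasTriangleConst.apply_coeff_invPow_mul_le {K : Type*} [Field K] {f : AbsoluteValue K ℝ}
    {A M : ℝ} (h : HasTriangleConst f A) {u v : K} (hu : u ≠ 0) (hv : v ≠ 0) (huM : f u ≤ M)
    (hvM : f v ≤ M) {N m : ℕ} (hm : m ≤ N) :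
    f ((u * v) ^ (2 * N + 1) * PowerSeries.coeff m (invPow N u * invPow N v)) ≤
      A ^ (5 * N) * M ^ (2 * N - m) := by
  have hM : 0 ≤ M := (f.nonneg u).trans huM
  have hA : 0 ≤ A := zero_le_one.trans h.one_le
  have hsum : (u * v) ^ (2 * N + 1) * PowerSeries.coeff m (invPow N u * invPow N v) =
      ∑ p ∈ Finset.HasAntidiagonal.antidiagonal m,
        ((N + p.1).choose N : K) * ((N + p.2).choose N : K) *
          ((-1) ^ m * (u ^ (N - p.1) * v ^ (N - p.2))) := by
    rw [PowerSeries.coeff_mul, Finset.mul_sum]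
    refine Finset.sum_congr rfl fun p hp => ?_
    have hp' : p.1 + p.2 = m := Finset.HasAntidiagonal.mem_antidiagonal.mp hp
    rw [coeff_invPow, coeff_invPow, ← pow_mul_inv_pow_add hu (by lia : p.1 ≤ N),
      ← pow_mul_inv_pow_add hv (by lia : p.2 ≤ N), ← hp']
    ring
  rw [hsum, show 5 * N = N + 4 * N by ring, pow_add, mul_assoc]
  refine h.sum_le (by positivity) ?_ fun p hp => ?_
  · rw [Finset.Nat.card_antidiagonal]
    exact (Nat.succ_le_succ hm).trans Nat.lt_two_pow_self
  · have hp' : p.1 + p.2 = m := Finset.HasAntidiagonal.mem_antidiagonal.mp hp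
    have huv : f ((-1) ^ m * (u ^ (N - p.1) * v ^ (N - p.2))) ≤ M ^ (2 * N - m) := by
      rw [show 2 * N - m = (N - p.1) + (N - p.2) by lia, pow_add]
      simp only [map_mul, map_pow, f.map_neg, map_one, one_pow, one_mul]
      gcongr
    rw [map_mul]
    exact mul_le_mul (h.apply_choose_mul_choose_le (by lia) (by lia)) huv (f.nonneg _)
      (by positivity)

end TriangleConstant

section Triangle

theorem fin_three_cases (i j : Fin 3) : j = i ∨ j = i + 1 ∨ j = i + 2 := by
  decide +revert

theorem fin_three_add_one_add_one (i : Fin 3) : i + 1 + 1 = i + 2 := by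
  decide +revert

theorem fin_three_add_one_add_two (i : Fin 3) : i + 1 + 2 = i := by
  decide +revert

theorem fin_three_add_two_add_one (i : Fin 3) : i + 2 + 1 = i := by
  decide +revert

theorem fin_three_add_two_add_two (i : Fin 3) : i + 2 + 2 = i + 1 := by
  decide +revert

@[to_additive sum_fin_three_cyclic]
theorem prod_fin_three_cyclic {M : Type*} [CommMonoid M] (g : Fin 3 → M) (i : Fin 3) :
    ∏ j, g j = g i * (g (i + 1) * g (i + 2)) := by
  rw [Fin.prod_univ_three]
  fin_cases i
  · exact mul_assoc _ _ _
  · exact (mul_assoc _ _ _).trans (mul_comm _ _) |>.trans (mul_assoc _ _ _)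
  · exact mul_comm _ _

theorem prod_erase_fin_three {M : Type*} [CommMonoid M] (g : Fin 3 → M) (i : Fin 3) :
    ∏ j ∈ Finset.univ.erase i, g j = g (i + 1) * g (i + 2) := by
  rw [show Finset.univ.erase i = {i + 1, i + 2} by decide +revert,
    Finset.prod_pair (by decide +revert)]

variable {K : Type*} [Field K]

/-- The side of the triangle with vertices `a 0`, `a 1`, `a 2` that is opposite to `a i`, oriented
cyclically. -/
def side (a : Fin 3 → K) (i : Fin 3) : K := a (i + 1) - a (i + 2)

theorem sum_side (a : Fin 3 → K) : ∑ i, side a i = 0 := by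
  simp only [side, Fin.sum_univ_three, Fin.reduceAdd, Fin.isValue]
  ring

theorem sub_add_one (a : Fin 3 → K) (i : Fin 3) : a i - a (i + 1) = side a (i + 2) := by
  rw [side, fin_three_add_two_add_one, fin_three_add_two_add_two]

theorem sub_add_two (a : Fin 3 → K) (i : Fin 3) : a i - a (i + 2) = -side a (i + 1) := by
  rw [side, fin_three_add_one_add_one, fin_three_add_one_add_two, neg_sub]

theorem side_ne_zero {a : Fin 3 → K} (ha : Function.Injective a) (i : Fin 3) : side a i ≠ 0 :=
  sub_ne_zero.mpr (ha.ne (by decide +revert))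

theorem injective_of_side_ne_zero {a : Fin 3 → K} (h : ∀ i, side a i ≠ 0) :
    Function.Injective a := by
  intro i j hij
  have h1 := h (i + 2)
  have h2 := neg_ne_zero.mpr (h (i + 1))
  rw [← sub_add_one] at h1
  rw [← sub_add_two] at h2
  rcases fin_three_cases i j with rfl | rfl | rfl
  · rfl
  · exact absurd (sub_eq_zero.mpr hij) h1
  · exact absurd (sub_eq_zero.mpr hij) h2

/-- The longest side of a triangle, as measured by `f`. -/
def maxSide (f : AbsoluteValue K ℝ) (a : Fin 3 → K) : ℝ := ⨆ i, f (side a i)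

/-- The shortest side of a triangle, as measured by `f`. -/
def minSide (f : AbsoluteValue K ℝ) (a : Fin 3 → K) : ℝ := ⨅ i, f (side a i)

/-- An index at which `g` attains its minimum. It depends on the values of `g` only, so that
triangles with sides of equal absolute values get the same index. -/
def minIndex (g : Fin 3 → ℝ) : Fin 3 := (exists_eq_ciInf_of_finite (f := g)).choose

theorem apply_side_minIndex (f : AbsoluteValue K ℝ) (a : Fin 3 → K) :
    f (side a (minIndex fun i => f (side a i))) = minSide f a :=
  (exists_eq_ciInf_of_finite (f := fun i => f (side a i))).choose_spec

theorem apply_side_le_maxSide (f : AbsoluteValue K ℝ) (a : Fin 3 → K) (i : Fin 3) :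
    f (side a i) ≤ maxSide f a :=
  le_ciSup (f := fun i => f (side a i)) (Set.finite_range _).bddAbove i

theorem minSide_le_apply_side (f : AbsoluteValue K ℝ) (a : Fin 3 → K) (i : Fin 3) :
    minSide f a ≤ f (side a i) :=
  ciInf_le (f := fun i => f (side a i)) (Set.finite_range _).bddBelow i

theorem minSide_le_maxSide (f : AbsoluteValue K ℝ) (a : Fin 3 → K) :
    minSide f a ≤ maxSide f a :=
  (minSide_le_apply_side f a 0).trans (apply_side_le_maxSide f a 0)

theorem minSide_pos (f : AbsoluteValue K ℝ) {a : Fin 3 → K} (ha : Function.Injective a) :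
    0 < minSide f a :=
  apply_side_minIndex f a ▸ f.pos (side_ne_zero ha _)

theorem maxSide_nonneg (f : AbsoluteValue K ℝ) (a : Fin 3 → K) : 0 ≤ maxSide f a :=
  (f.nonneg _).trans (apply_side_le_maxSide f a 0)

theorem maxSide_pos (f : AbsoluteValue K ℝ) {a : Fin 3 → K} (ha : Function.Injective a) :
    0 < maxSide f a :=
  (minSide_pos f ha).trans_le (minSide_le_maxSide f a)

theorem apply_sub_le_maxSide (f : AbsoluteValue K ℝ) (a : Fin 3 → K) (i j : Fin 3) :
    f (a i - a j) ≤ maxSide f a := by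
  rcases fin_three_cases i j with rfl | rfl | rfl
  · rw [sub_self, map_zero]
    exact maxSide_nonneg f a
  · rw [sub_add_one]
    exact apply_side_le_maxSide f a _
  · rw [sub_add_two, f.map_neg]
    exact apply_side_le_maxSide f a _

theorem HasTriangleConst.apply_side_le {f : AbsoluteValue K ℝ} {A : ℝ}
    (h : HasTriangleConst f A) (a : Fin 3 → K) (i : Fin 3) :
    f (side a i) ≤ A * max (f (side a (i + 1))) (f (side a (i + 2))) := by
  have hsum := (sum_fin_three_cyclic (side a) i).symm.trans (sum_side a)
  rw [eq_neg_of_add_eq_zero_left hsum, f.map_neg]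
  exact h _ _

theorem HasTriangleConst.maxSide_sq_mul_minSide_le {f : AbsoluteValue K ℝ} {A : ℝ}
    (h : HasTriangleConst f A) (a : Fin 3 → K) :
    maxSide f a ^ 2 * minSide f a ≤ A * ∏ i, f (side a i) := by
  set i := minIndex fun j => f (side a j)
  have hmin : f (side a i) = minSide f a := apply_side_minIndex f a
  have hx := h.apply_side_le a (i + 1)
  have hy := h.apply_side_le a (i + 2)
  rw [fin_three_add_one_add_one, fin_three_add_one_add_two, hmin,
    max_eq_left (minSide_le_apply_side f a _)] at hx
  rw [fin_three_add_two_add_one, fin_three_add_two_add_two, hmin,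
    max_eq_right (minSide_le_apply_side f a _)] at hy
  have hmax : maxSide f a ≤ max (f (side a (i + 1))) (f (side a (i + 2))) := by
    refine ciSup_le fun j => ?_
    rcases fin_three_cases i j with rfl | rfl | rfl
    · exact hmin.trans_le ((minSide_le_apply_side f a _).trans (le_max_left _ _))
    · exact le_max_left _ _
    · exact le_max_right _ _
  have hsq : maxSide f a ^ 2 ≤ A * (f (side a (i + 1)) * f (side a (i + 2))) := by
    rw [sq]
    have h0 := maxSide_nonneg f a
    rcases max_choice (f (side a (i + 1))) (f (side a (i + 2))) with hm | hm <;> rw [hm] at hmax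
    · exact (mul_le_mul hmax (hmax.trans hx) h0 (f.nonneg _)).trans_eq (by ring)
    · exact (mul_le_mul hmax (hmax.trans hy) h0 (f.nonneg _)).trans_eq (by ring)
  calc maxSide f a ^ 2 * minSide f a
      ≤ A * (f (side a (i + 1)) * f (side a (i + 2))) * minSide f a :=
        mul_le_mul_of_nonneg_right hsq (hmin ▸ f.nonneg _)
    _ = A * ∏ j, f (side a j) := by rw [prod_fin_three_cyclic _ i, hmin]; ring

end Triangle

section ScaledResidue

variable {K : Type*} [Field K]

/-- The residues of `(X - a k) dX / ∏ j, (X - a j) ^ (N + 1)` at the vertices of a triangle, with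
denominators cleared. They sum to zero, and the one at `a i` is divisible by a high power of the
opposite side. -/
def scaledResidue (a : Fin 3 → K) (N : ℕ) (k i : Fin 3) : K :=
  (∏ j, side a j) ^ (2 * N + 1) * residue a N i (Polynomial.X - Polynomial.C (a k))

theorem sum_scaledResidue {a : Fin 3 → K} (ha : Function.Injective a) (N : ℕ) (k : Fin 3) :
    ∑ i, scaledResidue a N k i = 0 := by
  simp only [scaledResidue, ← Finset.mul_sum]
  rw [sum_residue_eq_zero ha, mul_zero]
  rw [Polynomial.natDegree_X_sub_C, Fintype.card_fin]
  lia

theorem residue_X_sub_C (a : Fin 3 → K) (N : ℕ) (k i : Fin 3) :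
    residue a N i (Polynomial.X - Polynomial.C (a k)) = PowerSeries.coeff N
      ((PowerSeries.X + PowerSeries.C (a i - a k)) *
        (invPow N (side a (i + 2)) * invPow N (-side a (i + 1)))) := by
  rw [residue_apply, localSeries, prod_erase_fin_three, sub_add_one, sub_add_two]
  simp [add_sub_assoc]

theorem HasTriangleConst.apply_scaledResidue_le {f : AbsoluteValue K ℝ} {A : ℝ}
    (h : HasTriangleConst f A) {a : Fin 3 → K} (ha : Function.Injective a) (N : ℕ) (k i : Fin 3) :
    f (scaledResidue a N k i) ≤
      A ^ (5 * N + 1) * maxSide f a ^ (N + 1) * f (side a i) ^ (2 * N + 1) := by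
  set M := maxSide f a
  set u := side a (i + 2)
  set v := -side a (i + 1)
  set c : ℕ → K := fun m => (u * v) ^ (2 * N + 1) *
    PowerSeries.coeff m (invPow N u * invPow N v) with hc
  have hM : 0 ≤ M := maxSide_nonneg f a
  have hA : 0 ≤ A := zero_le_one.trans h.one_le
  have hbound {m : ℕ} (hm : m ≤ N) : f (c m) ≤ A ^ (5 * N) * M ^ (2 * N - m) :=
    h.apply_coeff_invPow_mul_le (side_ne_zero ha _) (neg_ne_zero.mpr (side_ne_zero ha _))
      (apply_side_le_maxSide f a _)
      ((f.map_neg _).trans_le (apply_side_le_maxSide f a _)) hm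
  have hvertex : f ((a i - a k) * c N) ≤ A ^ (5 * N) * M ^ (N + 1) := by
    rw [map_mul, pow_succ', mul_left_comm]
    refine mul_le_mul (apply_sub_le_maxSide f a i k) ?_ (f.nonneg _) hM
    simpa only [two_mul, Nat.add_sub_cancel] using hbound le_rfl
  have hcoeff : f ((u * v) ^ (2 * N + 1) *
      residue a N i (Polynomial.X - Polynomial.C (a k))) ≤ A * (A ^ (5 * N) * M ^ (N + 1)) := by
    rw [residue_X_sub_C, add_mul, map_add, PowerSeries.coeff_C_mul, mul_add,
      mul_left_comm _ (a i - a k)]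
    refine h.add_le hA ?_ hvertex
    cases N with
    | zero => simpa using mul_nonneg zero_le_one hM
    | succ n =>
      rw [PowerSeries.coeff_succ_X_mul]
      simpa only [show 2 * (n + 1) - n = n + 1 + 1 by lia] using hbound n.le_succ
  have hsides : ∏ j, side a j = -(side a i * (u * v)) := by
    rw [prod_fin_three_cyclic _ i]
    ring
  rw [scaledResidue, hsides, ← neg_one_mul, mul_pow, mul_pow, mul_assoc, mul_assoc, map_mul,
    map_mul, map_pow, map_pow, f.map_neg, map_one, one_pow, one_mul]
  exact (mul_le_mul_of_nonneg_left hcoeff (by positivity)).trans_eq (by ring)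

end ScaledResidue

section CrossDet

variable {K : Type*} [Field K]

/-- The determinant `v 0 * w 1 - v 1 * w 0`, which measures how far two vectors with coordinates
summing to zero are from being proportional. -/
def crossDet (v w : Fin 3 → K) : K := v 0 * w 1 - v 1 * w 0

theorem crossDet_eq {v w : Fin 3 → K} (hv : ∑ i, v i = 0) (hw : ∑ i, w i = 0) (i : Fin 3) :
    crossDet v w = v i * w (i + 1) - v (i + 1) * w i := by
  rw [Fin.sum_univ_three] at hv hw
  have hv2 : v 2 = -(v 0 + v 1) := eq_neg_of_add_eq_zero_right hv
  have hw2 : w 2 = -(w 0 + w 1) := eq_neg_of_add_eq_zero_right hw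
  fin_cases i <;> simp [crossDet, hv2, hw2] <;> ring

theorem HasTriangleConst.apply_crossDet_side_le {f : AbsoluteValue K ℝ} {A B : ℝ}
    (h : HasTriangleConst f A) {a b v : Fin 3 → K} {n : ℕ} (hv : ∑ i, v i = 0)
    (hB : 0 ≤ B) (hvB : ∀ i, f (v i) ≤ B * f (side a i) ^ n)
    (hab : minIndex (fun i => f (side a i)) = minIndex fun i => f (side b i)) :
    f (crossDet v (side b)) ≤
      A * B * max (minSide f a ^ n * maxSide f b) (maxSide f a ^ n * minSide f b) := by
  set i := minIndex fun i => f (side a i)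
  have hA : 0 ≤ A := zero_le_one.trans h.one_le
  have hmul {j k : Fin 3} {x y : ℝ} (hx : f (side a j) ≤ x) (hy : f (side b k) ≤ y) :
      f (v j * side b k) ≤ B * (x ^ n * y) := by
    have hx0 : 0 ≤ x := (f.nonneg _).trans hx
    rw [map_mul, ← mul_assoc]
    refine mul_le_mul ((hvB j).trans ?_) hy (f.nonneg _) (by positivity)
    gcongr
  rw [crossDet_eq hv (sum_side b) i, sub_eq_add_neg, mul_assoc, mul_max_of_nonneg _ _ hB]
  refine h.add_le hA (le_max_of_le_left (hmul (apply_side_minIndex f a).le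
    (apply_side_le_maxSide f b _))) ?_
  rw [f.map_neg]
  refine le_max_of_le_right (hmul (apply_side_le_maxSide f a _) ?_)
  rw [hab]
  exact (apply_side_minIndex f b).le

theorem exists_crossDet_scaledResidue_ne_zero [CharZero K] {a b : Fin 3 → K}
    (ha : Function.Injective a) (hb : Function.Injective b) (N : ℕ) :
    ∃ k, crossDet (scaledResidue a N k) (side b) ≠ 0 := by
  by_contra! hdet
  set ρ := residue a N
  set ℓ : Fin 3 → Polynomial K := fun k => Polynomial.X - Polynomial.C (a k)
  have hℓ (k : Fin 3) : ℓ k ≠ 0 := Polynomial.X_sub_C_ne_zero _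
  have hvanish {p : Polynomial K} (hp : p.natDegree ≤ 1) (h : ∀ i, ρ i p = 0) : p = 0 :=
    eq_zero_of_residue_eq_zero ha (by rw [Fintype.card_fin]; lia) h
  have hprop (k i : Fin 3) : ρ i (ℓ k) * side b (i + 1) = ρ (i + 1) (ℓ k) * side b i := by
    have h := (crossDet_eq (sum_scaledResidue ha N k) (sum_side b) i).symm.trans (hdet k)
    have h0 : (∏ j, side a j) ^ (2 * N + 1) ≠ 0 :=
      pow_ne_zero _ (Finset.prod_ne_zero_iff.mpr fun j _ => side_ne_zero ha j)
    refine mul_left_cancel₀ h0 (sub_eq_zero.mp (Eq.trans ?_ h))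
    simp only [scaledResidue, ρ, ℓ]
    ring
  have hall {p : Polynomial K} (hp : p.natDegree ≤ 1)
      (hpb : ∀ i, ρ i p * side b (i + 1) = ρ (i + 1) p * side b i) (h0 : ρ 0 p = 0) : p = 0 := by
    have hnext {i : Fin 3} (hi : ρ i p = 0) : ρ (i + 1) p = 0 := by
      simpa [hi, side_ne_zero hb] using (hpb i).symm
    refine hvanish hp fun i => ?_
    rcases fin_three_cases 0 i with rfl | rfl | rfl
    · exact h0
    · exact hnext h0
    · exact fin_three_add_one_add_one 0 ▸ hnext (hnext h0)
  set c := ρ 0 (ℓ 0)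
  set d := ρ 0 (ℓ 1)
  have hcomb : d • ℓ 0 - c • ℓ 1 = 0 := by
    refine hall ?_ (fun i => ?_) ?_
    · simp only [ℓ]; compute_degree
    · simp only [map_sub, map_smul, smul_eq_mul]
      linear_combination d * hprop 0 i - c * hprop 1 i
    · simp only [map_sub, map_smul, smul_eq_mul, c, d]; ring
  have hc : c = 0 := by
    have h := congrArg (Polynomial.eval (a 0)) hcomb
    simpa [ℓ, sub_eq_zero, ha.eq_iff] using h
  exact hℓ 0 (hall (Polynomial.natDegree_X_sub_C _).le (hprop 0) hc)

end CrossDet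

section UnitTriangle

variable {K : Type*} [Field K] {O : Subring K} {a : Fin 3 → K}

/-- The sides of the triangle `a` are units of the ring `O`. -/
structure IsUnitTriangle (O : Subring K) (a : Fin 3 → K) : Prop where
  side_ne_zero : ∀ i, side a i ≠ 0
  side_mem : ∀ i, side a i ∈ O
  inv_side_mem : ∀ i, (side a i)⁻¹ ∈ O

theorem coeff_mul_mem {p q : PowerSeries K} (hp : ∀ n, PowerSeries.coeff n p ∈ O)
    (hq : ∀ n, PowerSeries.coeff n q ∈ O) (n : ℕ) : PowerSeries.coeff n (p * q) ∈ O := by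
  rw [PowerSeries.coeff_mul]
  exact O.sum_mem fun _ _ => O.mul_mem (hp _) (hq _)

theorem coeff_invPow_mem {u : K} (hu : u⁻¹ ∈ O) (N n : ℕ) :
    PowerSeries.coeff n (invPow N u) ∈ O := by
  rw [coeff_invPow]
  exact O.mul_mem (O.mul_mem (O.pow_mem (O.neg_mem O.one_mem) _) (natCast_mem O _))
    (O.pow_mem hu _)

namespace IsUnitTriangle

theorem injective (h : IsUnitTriangle O a) : Function.Injective a :=
  injective_of_side_ne_zero h.side_ne_zero

theorem sub_mem (h : IsUnitTriangle O a) (i j : Fin 3) : a i - a j ∈ O := by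
  rcases fin_three_cases i j with rfl | rfl | rfl
  · exact (sub_self (a j)).symm ▸ O.zero_mem
  · exact sub_add_one a i ▸ h.side_mem _
  · exact sub_add_two a i ▸ O.neg_mem (h.side_mem _)

theorem scaledResidue_mem (h : IsUnitTriangle O a) (N : ℕ) (k i : Fin 3) :
    scaledResidue a N k i ∈ O := by
  refine O.mul_mem (O.pow_mem (O.prod_mem fun j _ => h.side_mem j) _) ?_
  rw [residue_X_sub_C]
  refine coeff_mul_mem (fun n => ?_) (coeff_mul_mem (coeff_invPow_mem (h.inv_side_mem _) N)
    (coeff_invPow_mem (inv_neg (a := side a (i + 1)) ▸ O.neg_mem (h.inv_side_mem _)) N)) N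
  rw [map_add, PowerSeries.coeff_X, PowerSeries.coeff_C]
  split_ifs <;> simp [h.sub_mem, O.one_mem, O.add_mem]

end IsUnitTriangle

end UnitTriangle

section PlaceFamily

/-- Finitely many absolute values on a field `K`, those outside `arch` being nonarchimedean, with
weights and a subring of `K` on whose nonzero elements the weighted product of the absolute values
is at least `1`. The example to have in mind is given by the places in a finite set containing the
archimedean ones, and the ring of elements integral outside that set. -/
structure PlaceFamily (K W : Type*) [Field K] [Fintype W] where
  abv : W → AbsoluteValue K ℝ
  weight : W → ℝ
  weight_pos : ∀ w, 0 < weight w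
  arch : Finset W
  arch_nonempty : arch.Nonempty
  embedding : {w // w ∈ arch} → K →+* ℂ
  abv_eq_norm_embedding : ∀ w x, abv w.1 x = ‖embedding w x‖
  isNonarchimedean : ∀ w ∉ arch, IsNonarchimedean (abv w)
  integers : Subring K
  sum_log_nonneg : ∀ x ∈ integers, x ≠ 0 → 0 ≤ ∑ w, weight w * Real.log (abv w x)

namespace PlaceFamily

variable {K W : Type*} [Field K] [Fintype W] (P : PlaceFamily K W)

/-- The constant of the triangle inequality at each place. -/
def triangleConst (w : W) : ℝ := if w ∈ P.arch then 2 else 1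

theorem hasTriangleConst (w : W) : HasTriangleConst (P.abv w) (P.triangleConst w) := by
  unfold triangleConst
  split_ifs with hw
  · exact hasTriangleConst_two _
  · exact fun x y => (P.isNonarchimedean w hw x y).trans_eq (one_mul _).symm

/-- The weighted sum of the logarithms of the constants of the triangle inequality: the error term
in comparisons of heights. -/
def errorTerm : ℝ := ∑ w, P.weight w * Real.log (P.triangleConst w)

theorem errorTerm_pos : 0 < P.errorTerm := by
  obtain ⟨w, hw⟩ := P.arch_nonempty
  refine Finset.sum_pos' (fun w _ => mul_nonneg (P.weight_pos w).le
    (Real.log_nonneg (P.hasTriangleConst w).one_le)) ⟨w, Finset.mem_univ _, ?_⟩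
  rw [triangleConst, if_pos hw]
  exact mul_pos (P.weight_pos w) (Real.log_pos one_lt_two)

/-- The logarithmic height of a triangle, as a point of the projective plane with coordinates the
sides. -/
def height (a : Fin 3 → K) : ℝ := ∑ w, P.weight w * Real.log (maxSide (P.abv w) a)

/-- The weighted logarithm of the ratio between the longest and the shortest side. -/
def spread (a : Fin 3 → K) (w : W) : ℝ :=
  P.weight w * (Real.log (maxSide (P.abv w) a) - Real.log (minSide (P.abv w) a))

/-- The sum of the spreads over all places. -/
def totalSpread (a : Fin 3 → K) : ℝ := ∑ w, P.spread a w

/-- The index of a shortest side at each place. -/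
def shortest (a : Fin 3 → K) (w : W) : Fin 3 := minIndex fun i => P.abv w (side a i)

variable {P} {a b : Fin 3 → K}

theorem spread_nonneg (ha : Function.Injective a) (w : W) : 0 ≤ P.spread a w :=
  mul_nonneg (P.weight_pos w).le (sub_nonneg.mpr
    (Real.log_le_log (minSide_pos _ ha) (minSide_le_maxSide _ a)))

theorem sum_log_eq_zero {x : K} (hx : x ∈ P.integers) (hx' : x⁻¹ ∈ P.integers) (h0 : x ≠ 0) :
    ∑ w, P.weight w * Real.log (P.abv w x) = 0 := by
  refine le_antisymm ?_ (P.sum_log_nonneg x hx h0)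
  simpa using P.sum_log_nonneg _ hx' (inv_ne_zero h0)

theorem three_mul_height_le (ha : IsUnitTriangle P.integers a) :
    3 * P.height a ≤ P.totalSpread a + P.errorTerm := by
  have hprod : ∑ w, P.weight w * ∑ i, Real.log (P.abv w (side a i)) = 0 := by
    simp_rw [Finset.mul_sum]
    rw [Finset.sum_comm]
    exact Finset.sum_eq_zero fun i _ =>
      sum_log_eq_zero (ha.side_mem i) (ha.inv_side_mem i) (ha.side_ne_zero i)
  have hlocal (w : W) : 2 * Real.log (maxSide (P.abv w) a) + Real.log (minSide (P.abv w) a) ≤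
      Real.log (P.triangleConst w) + ∑ i, Real.log (P.abv w (side a i)) := by
    have hmax := maxSide_pos (P.abv w) ha.injective
    have hmin := minSide_pos (P.abv w) ha.injective
    have hside (i : Fin 3) : P.abv w (side a i) ≠ 0 := (P.abv w).ne_zero (ha.side_ne_zero i)
    have hlog := Real.log_le_log (by positivity)
      ((P.hasTriangleConst w).maxSide_sq_mul_minSide_le a)
    rwa [Real.log_mul (by positivity) (by positivity), Real.log_pow, Real.log_mul
      (zero_lt_one.trans_le (P.hasTriangleConst w).one_le).ne'
      (Finset.prod_ne_zero_iff.mpr fun i _ => hside i), Real.log_prod fun i _ => hside i] at hlog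
  rw [← add_zero (P.errorTerm), ← hprod, height, totalSpread, errorTerm, Finset.mul_sum,
    ← Finset.sum_add_distrib, ← Finset.sum_add_distrib]
  refine Finset.sum_le_sum fun w _ => ?_
  rw [spread]
  linarith [mul_le_mul_of_nonneg_left (hlocal w) (P.weight_pos w).le]

theorem log_le_sub_min {d A M M' m m' : ℝ} {c e k : ℕ} (hd : 0 < d) (hA : 0 < A) (hM : 0 < M)
    (hM' : 0 < M') (hm : 0 < m) (hm' : 0 < m')
    (h : d ≤ A ^ c * M ^ e * max (m ^ k * M') (M ^ k * m')) :
    Real.log d ≤ c * Real.log A + (e + k) * Real.log M + Real.log M' -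
      min (k * (Real.log M - Real.log m)) (Real.log M' - Real.log m') := by
  have hlog {x y : ℝ} (hx : 0 < x) (hy : 0 < y) : Real.log (A ^ c * M ^ e * (x ^ k * y)) =
      c * Real.log A + e * Real.log M + (k * Real.log x + Real.log y) := by
    rw [Real.log_mul (by positivity) (by positivity), Real.log_mul (by positivity) (by positivity),
      Real.log_mul (by positivity) hy.ne', Real.log_pow, Real.log_pow, Real.log_pow]
  have hle := Real.log_le_log hd h
  rcases max_choice (m ^ k * M') (M ^ k * m') with hmax | hmax
  · rw [hmax, hlog hm hM'] at hle
    linarith [min_le_left (k * (Real.log M - Real.log m)) (Real.log M' - Real.log m')]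
  · rw [hmax, hlog hM hm'] at hle
    linarith [min_le_right (k * (Real.log M - Real.log m)) (Real.log M' - Real.log m')]

theorem sum_min_mul_spread_le {v : Fin 3 → K} {c e k : ℕ} (ha : Function.Injective a)
    (hb : IsUnitTriangle P.integers b) (hv : ∀ i, v i ∈ P.integers) (hsum : ∑ i, v i = 0)
    (hbound : ∀ w i, P.abv w (v i) ≤
      P.triangleConst w ^ c * maxSide (P.abv w) a ^ e * P.abv w (side a i) ^ k)
    (hdet : crossDet v (side b) ≠ 0) (hab : P.shortest a = P.shortest b) :
    ∑ w, min (k * P.spread a w) (P.spread b w) ≤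
      (e + k) * P.height a + P.height b + (c + 1) * P.errorTerm := by
  have hmem : crossDet v (side b) ∈ P.integers :=
    sub_mem (mul_mem (hv _) (hb.side_mem _)) (mul_mem (hv _) (hb.side_mem _))
  have hlocal (w : W) : Real.log (P.abv w (crossDet v (side b))) + min
      (k * (Real.log (maxSide (P.abv w) a) - Real.log (minSide (P.abv w) a)))
      (Real.log (maxSide (P.abv w) b) - Real.log (minSide (P.abv w) b)) ≤
      (e + k) * Real.log (maxSide (P.abv w) a) + Real.log (maxSide (P.abv w) b) +
        (c + 1 : ℕ) * Real.log (P.triangleConst w) := by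
    have hA : 0 < P.triangleConst w := zero_lt_one.trans_le (P.hasTriangleConst w).one_le
    have hM : 0 < maxSide (P.abv w) a := maxSide_pos _ ha
    have h := (P.hasTriangleConst w).apply_crossDet_side_le hsum (by positivity) (hbound w)
      (congrFun hab w)
    rw [← mul_assoc, ← pow_succ'] at h
    linarith [log_le_sub_min ((P.abv w).pos hdet) hA hM (maxSide_pos _ hb.injective)
      (minSide_pos _ ha) (minSide_pos _ hb.injective) h]
  have hspread (w : W) : min (k * P.spread a w) (P.spread b w) = P.weight w * min
      (k * (Real.log (maxSide (P.abv w) a) - Real.log (minSide (P.abv w) a)))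
      (Real.log (maxSide (P.abv w) b) - Real.log (minSide (P.abv w) b)) := by
    rw [mul_min_of_nonneg _ _ (P.weight_pos w).le, mul_left_comm, spread, spread]
  refine le_trans (le_add_of_nonneg_left (P.sum_log_nonneg _ hmem hdet)) ?_
  simp only [hspread, height, errorTerm, Finset.mul_sum, ← Finset.sum_add_distrib]
  refine Finset.sum_le_sum fun w _ => ?_
  have h := mul_le_mul_of_nonneg_left (hlocal w) (P.weight_pos w).le
  push_cast at h
  linarith

theorem sum_min_odd_mul_spread_le [CharZero K] (ha : IsUnitTriangle P.integers a)
    (hb : IsUnitTriangle P.integers b) (hab : P.shortest a = P.shortest b) (N : ℕ) :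
    ∑ w, min ((2 * N + 1) * P.spread a w) (P.spread b w) ≤
      (3 * N + 2) * P.height a + P.height b + (5 * N + 2) * P.errorTerm := by
  obtain ⟨k, hk⟩ := exists_crossDet_scaledResidue_ne_zero ha.injective hb.injective N
  have h := sum_min_mul_spread_le ha.injective hb (ha.scaledResidue_mem N k)
    (sum_scaledResidue ha.injective N k)
    (fun w i => (P.hasTriangleConst w).apply_scaledResidue_le ha.injective N k i) hk hab
  push_cast at h
  linarith

theorem sum_min_spread_le (ha : IsUnitTriangle P.integers a) (hb : IsUnitTriangle P.integers b)
    (hdet : crossDet (side a) (side b) ≠ 0) (hab : P.shortest a = P.shortest b) :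
    ∑ w, min (P.spread a w) (P.spread b w) ≤ P.height a + P.height b + P.errorTerm := by
  have h := sum_min_mul_spread_le (c := 0) (e := 0) (k := 1) ha.injective hb ha.side_mem
    (sum_side a) (fun w i => by simp) hdet hab
  simpa using h

end PlaceFamily

end PlaceFamily

section Counting

theorem card_mul_pow_mul_pow_le_one {ι : Type*} [Fintype ι] {G : Finset (ι → ℕ)} {n : ℕ}
    (hG : ∀ g ∈ G, ∑ i, g i ≤ n) {x : ℝ} (hx : 0 ≤ x) (hx1 : x ≤ 1) :
    G.card * x ^ n * (1 - x) ^ Fintype.card ι ≤ 1 := by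
  have hsub : G ⊆ Fintype.piFinset fun _ => Finset.range (n + 1) := fun g hg =>
    Fintype.mem_piFinset.mpr fun i => Finset.mem_range_succ_iff.mpr <|
      (Finset.single_le_sum (fun _ _ => Nat.zero_le _) (Finset.mem_univ i)).trans (hG g hg)
  have hgeom : (∑ k ∈ Finset.range (n + 1), x ^ k) * (1 - x) ≤ 1 := by
    rw [geom_sum_mul_neg]
    exact sub_le_self _ (by positivity)
  calc G.card * x ^ n * (1 - x) ^ Fintype.card ι
      ≤ (∑ g ∈ G, ∏ i, x ^ g i) * (1 - x) ^ Fintype.card ι := by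
        refine mul_le_mul_of_nonneg_right ?_ (pow_nonneg (sub_nonneg.mpr hx1) _)
        rw [← nsmul_eq_mul]
        refine Finset.card_nsmul_le_sum _ _ _ fun g hg => ?_
        rw [Finset.prod_pow_eq_pow_sum]
        exact pow_le_pow_of_le_one hx hx1 (hG g hg)
    _ ≤ (∏ _i : ι, ∑ k ∈ Finset.range (n + 1), x ^ k) * (1 - x) ^ Fintype.card ι := by
        refine mul_le_mul_of_nonneg_right ?_ (pow_nonneg (sub_nonneg.mpr hx1) _)
        rw [Finset.prod_univ_sum]
        exact Finset.sum_le_sum_of_subset_of_nonneg hsub fun g _ _ => by positivity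
    _ = ((∑ k ∈ Finset.range (n + 1), x ^ k) * (1 - x)) ^ Fintype.card ι := by
        rw [Finset.prod_const, Finset.card_univ, mul_pow]
    _ ≤ 1 := pow_le_one₀ (mul_nonneg (Finset.sum_nonneg fun _ _ => by positivity)
        (sub_nonneg.mpr hx1)) hgeom

theorem card_le_fiftySix_pow {ι : Type*} [Fintype ι] {G : Finset (ι → ℕ)}
    (hG : ∀ g ∈ G, ∑ i, g i ≤ 20 * Fintype.card ι) : G.card ≤ 56 ^ Fintype.card ι := by
  have h := card_mul_pow_mul_pow_le_one hG (x := 20 / 21) (by norm_num) (by norm_num)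
  rw [pow_mul, mul_assoc, ← mul_pow] at h
  have hconst : (1 : ℝ) ≤ (56 * ((20 / 21) ^ 20 * (1 - 20 / 21))) ^ Fintype.card ι :=
    one_le_pow₀ (by norm_num)
  rw [mul_pow] at hconst
  have hpos : (0 : ℝ) < ((20 / 21) ^ 20 * (1 - 20 / 21)) ^ Fintype.card ι :=
    pow_pos (by norm_num) _
  exact_mod_cast le_of_mul_le_mul_right (h.trans hconst) hpos

theorem card_le_of_mul_le {α : Type*} {F : Finset α} {f : α → ℝ} {r c : ℝ} (hr : 0 ≤ r) {k : ℕ}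
    (hc : ∀ x ∈ F, c ≤ f x) (hk : ∀ x ∈ F, f x < r ^ k * c)
    (hsep : ∀ x ∈ F, ∀ y ∈ F, x ≠ y → f x ≤ f y → r * f x ≤ f y) : F.card ≤ k := by
  induction k generalizing F c with
  | zero =>
    rw [Nat.le_zero, Finset.card_eq_zero, Finset.eq_empty_iff_forall_notMem]
    intro x hx
    simpa using (hc x hx).trans_lt (hk x hx)
  | succ k ih =>
    rcases F.eq_empty_or_nonempty with rfl | hF
    · exact Nat.zero_le _
    obtain ⟨x, hx, hmin⟩ := Finset.exists_min_image F f hF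
    have h : (F.erase x).card ≤ k := by
      refine ih (c := r * c) (fun y hy => ?_) (fun y hy => ?_) fun y hy z hz =>
        hsep y (Finset.mem_of_mem_erase hy) z (Finset.mem_of_mem_erase hz)
      · have hyF := Finset.mem_of_mem_erase hy
        exact (mul_le_mul_of_nonneg_left (hc x hx) hr).trans
          (hsep x hx y hyF (Finset.ne_of_mem_erase hy).symm (hmin y hyF))
      · exact (hk y (Finset.mem_of_mem_erase hy)).trans_eq (by rw [pow_succ, mul_assoc])
    rw [Finset.card_erase_of_mem hx] at h
    exact Nat.sub_le_iff_le_add.mp h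

variable {W : Type*} [Fintype W]

/-- The share of `w` in the total of `t`, measured in `n`-ths of the total and rounded down. -/
def share (n : ℕ) (t : W → ℝ) (w : W) : ℕ := ⌊n * (t w / ∑ w, t w)⌋₊

variable {t t' : W → ℝ}

theorem share_le (n : ℕ) (ht : ∀ w, 0 ≤ t w) (w : W) : share n t w ≤ n * (t w / ∑ w, t w) :=
  Nat.floor_le (mul_nonneg n.cast_nonneg (div_nonneg (ht w) (Finset.sum_nonneg fun w _ => ht w)))

theorem sum_share_le (n : ℕ) (ht : ∀ w, 0 ≤ t w) (S : Finset W) : ∑ w ∈ S, share n t w ≤ n := by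
  have h : ∑ w ∈ S, (share n t w : ℝ) ≤ n := calc
    ∑ w ∈ S, (share n t w : ℝ) ≤ ∑ w, (share n t w : ℝ) :=
      Finset.sum_le_sum_of_subset_of_nonneg S.subset_univ fun _ _ _ => Nat.cast_nonneg _
    _ ≤ ∑ w, n * (t w / ∑ w, t w) := Finset.sum_le_sum fun w _ => share_le n ht w
    _ = n * ((∑ w, t w) / ∑ w, t w) := by rw [← Finset.mul_sum, Finset.sum_div]
    _ ≤ n := mul_le_of_le_one_right n.cast_nonneg (div_self_le_one _)
  exact_mod_cast h

theorem mul_min_sum_le_sum_min {S : Finset W} {n : ℕ} (hn : 0 < n) (ht : ∀ w, 0 ≤ t w)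
    (ht' : ∀ w, 0 ≤ t' w) (hT : 0 < ∑ w, t w) (hT' : 0 < ∑ w, t' w)
    (hshare : ∀ w ∈ S, share n t w = share n t' w) (hout : ∀ w ∉ S, t w = t' w) {k : ℝ}
    (hk : 1 ≤ k) :
    (1 - S.card / n) * min (k * ∑ w, t w) (∑ w, t' w) ≤ ∑ w, min (k * t w) (t' w) := by
  set T := ∑ w, t w
  set T' := ∑ w, t' w with hT'def
  set m := min (k * T) T'
  have hm : 0 ≤ m := le_min (by positivity) hT'.le
  have hn' : (0 : ℝ) < n := Nat.cast_pos.mpr hn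
  have hin {w : W} (hw : w ∈ S) : t' w / T' * m - m / n ≤ min (k * t w) (t' w) := by
    have hfloor : n * (t' w / T') < share n t w + 1 := hshare w hw ▸ Nat.lt_floor_add_one _
    have hle : share n t w ≤ n * (t w / T) := share_le n ht w
    have hle' : share n t w ≤ n * (t' w / T') := hshare w hw ▸ share_le n ht' w
    have hlow : t' w / T' * m - m / n ≤ share n t w / n * m := by
      rw [div_mul_eq_mul_div (share n t w : ℝ), ← sub_nonneg, ← mul_nonneg_iff_of_pos_left hn']
      have h := mul_nonneg (sub_nonneg.mpr hfloor.le) hm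
      field_simp at h ⊢
      linarith
    refine hlow.trans (le_min ?_ ?_)
    · calc share n t w / n * m ≤ t w / T * (k * T) := mul_le_mul
            ((div_le_iff₀' hn').mpr hle) (min_le_left _ _) hm (div_nonneg (ht w) hT.le)
        _ = k * t w := by field_simp
    · calc share n t w / n * m ≤ t' w / T' * T' := mul_le_mul
            ((div_le_iff₀' hn').mpr hle') (min_le_right _ _) hm (div_nonneg (ht' w) hT'.le)
        _ = t' w := div_mul_cancel₀ _ hT'.ne'
  have hnotin {w : W} (hw : w ∉ S) : t' w / T' * m ≤ min (k * t w) (t' w) := by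
    rw [hout w hw, min_eq_right (le_mul_of_one_le_left (ht' w) hk)]
    calc t' w / T' * m ≤ t' w / T' * T' :=
          mul_le_mul_of_nonneg_left (min_le_right _ _) (div_nonneg (ht' w) hT'.le)
      _ = t' w := div_mul_cancel₀ _ hT'.ne'
  calc (1 - S.card / n) * m
      = ∑ w, (t' w / T' * m - if w ∈ S then m / n else 0) := by
        rw [Finset.sum_sub_distrib, ← Finset.sum_mul, ← Finset.sum_div, ← hT'def,
          div_self hT'.ne', Finset.sum_ite_mem, Finset.univ_inter, Finset.sum_const, nsmul_eq_mul]
        ring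
    _ ≤ ∑ w, min (k * t w) (t' w) := Finset.sum_le_sum fun w _ => by
        split_ifs with hw
        · exact hin hw
        · exact (sub_zero _).trans_le (hnotin hw)

end Counting

section LargeTriangles

namespace PlaceFamily

variable {K W : Type*} [Field K] [Fintype W]

/-- The triangles `a` and `b` have shortest sides of the same index at every place, equal spreads
outside `S`, and spreads distributed in the same way over `S` up to errors of a twentieth. -/
structure SameCell (P : PlaceFamily K W) (S : Finset W) (a b : Fin 3 → K) : Prop where
  shortest_eq : P.shortest a = P.shortest b
  spread_eq : ∀ w ∉ S, P.spread a w = P.spread b w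
  share_eq : ∀ w ∈ S, share (20 * S.card) (P.spread a) w = share (20 * S.card) (P.spread b) w

variable {P : PlaceFamily K W} {S : Finset W} {a b : Fin 3 → K}

theorem SameCell.mul_min_totalSpread_le (h : P.SameCell S a b) (hS : S.Nonempty)
    (ha : Function.Injective a) (hb : Function.Injective b) (hTa : 0 < P.totalSpread a)
    (hTb : 0 < P.totalSpread b) {k : ℝ} (hk : 1 ≤ k) :
    19 / 20 * min (k * P.totalSpread a) (P.totalSpread b) ≤
      ∑ w, min (k * P.spread a w) (P.spread b w) := by
  have hcard : (S.card : ℝ) ≠ 0 := Nat.cast_ne_zero.mpr hS.card_ne_zero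
  refine le_of_eq_of_le ?_ (mul_min_sum_le_sum_min (S := S) (n := 20 * S.card)
    (mul_pos (by norm_num) hS.card_pos) (spread_nonneg ha) (spread_nonneg hb) hTa hTb
    h.share_eq h.spread_eq hk)
  rw [totalSpread, totalSpread, Nat.cast_mul, div_mul_cancel_right₀ hcard]
  norm_num

theorem SameCell.mul_totalSpread_le (h : P.SameCell S a b) (hS : S.Nonempty)
    (ha : IsUnitTriangle P.integers a) (hb : IsUnitTriangle P.integers b)
    (hdet : crossDet (side a) (side b) ≠ 0) (hlarge : 29 / 4 * P.errorTerm ≤ P.totalSpread a)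
    (hle : P.totalSpread a ≤ P.totalSpread b) :
    29 / 25 * P.totalSpread a ≤ P.totalSpread b := by
  have hΛ := P.errorTerm_pos
  have hpos : 0 < P.totalSpread a := by linarith
  have hcell := h.mul_min_totalSpread_le hS ha.injective hb.injective hpos (hpos.trans_le hle)
    le_rfl
  simp only [one_mul, min_eq_left hle] at hcell
  linarith [sum_min_spread_le ha hb hdet h.shortest_eq, three_mul_height_le ha,
    three_mul_height_le hb]

theorem SameCell.totalSpread_lt [CharZero K] (h : P.SameCell S a b) (hS : S.Nonempty)
    (ha : IsUnitTriangle P.integers a) (hb : IsUnitTriangle P.integers b)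
    (hlarge : 145 * P.errorTerm ≤ P.totalSpread a) :
    P.totalSpread b < 20 * P.totalSpread a := by
  by_contra! hratio
  have hΛ := P.errorTerm_pos
  have hpos : 0 < P.totalSpread a := by linarith
  set T := P.totalSpread a
  set T' := P.totalSpread b
  -- `2 * N + 1` is the largest odd integer not exceeding the ratio of the spreads.
  set N := ⌊(T' / T - 1) / 2⌋₊ with hN
  have hq : 20 ≤ T' / T := (le_div_iff₀ hpos).mpr hratio
  have hfloor := Nat.floor_le (a := (T' / T - 1) / 2) (by linarith)
  have hfloor' := Nat.lt_floor_add_one ((T' / T - 1) / 2)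
  rw [← hN] at hfloor hfloor'
  have hN9 : (9 : ℝ) ≤ N := by exact_mod_cast (Nat.le_floor (by norm_num; linarith) : 9 ≤ N)
  have hlow : (2 * N + 1) * T ≤ T' := by rw [← le_div_iff₀ hpos]; linarith
  have hhigh : T' ≤ (2 * N + 3) * T := by rw [← div_le_iff₀ hpos]; linarith
  have hcell := h.mul_min_totalSpread_le hS ha.injective hb.injective hpos (by linarith)
    (k := 2 * N + 1) (by linarith)
  rw [min_eq_left hlow] at hcell
  have hcompare := sum_min_odd_mul_spread_le ha hb h.shortest_eq N
  have hheight : (3 * N + 2) * P.height a ≤ (3 * N + 2) * ((T + P.errorTerm) / 3) :=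
    mul_le_mul_of_nonneg_left (by linarith [three_mul_height_le ha]) (by positivity)
  have hNΛ : (N : ℝ) * (145 * P.errorTerm) ≤ N * T :=
    mul_le_mul_of_nonneg_left hlarge (by positivity)
  have hNT : 9 * T ≤ N * T := mul_le_mul_of_nonneg_right hN9 hpos.le
  linarith [hNT, three_mul_height_le hb]

/-- Pairwise non-proportional triangles with unit sides whose absolute values at the places outside
`S` are prescribed. -/
structure IsTriangleSystem (P : PlaceFamily K W) (S : Finset W) (F : Set (Fin 3 → K)) : Prop where
  isUnitTriangle : ∀ a ∈ F, IsUnitTriangle P.integers a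
  abv_side_eq : ∀ a ∈ F, ∀ b ∈ F, ∀ w ∉ S, ∀ i, P.abv w (side a i) = P.abv w (side b i)
  crossDet_ne_zero : F.Pairwise fun a b => crossDet (side a) (side b) ≠ 0

namespace IsTriangleSystem

theorem mono {F F' : Set (Fin 3 → K)} (hF : P.IsTriangleSystem S F) (h : F' ⊆ F) :
    P.IsTriangleSystem S F' :=
  ⟨fun a ha => hF.isUnitTriangle a (h ha),
    fun a ha b hb => hF.abv_side_eq a (h ha) b (h hb), hF.crossDet_ne_zero.mono h⟩

variable {F : Finset (Fin 3 → K)}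

theorem card_le_of_sameCell [CharZero K] (hF : P.IsTriangleSystem S F) (hS : S.Nonempty)
    (hlarge : ∀ a ∈ F, 29 / 4 * P.errorTerm ≤ P.totalSpread a)
    (hcell : ∀ a ∈ F, ∀ b ∈ F, P.SameCell S a b) : F.card ≤ 42 := by
  have hgap : ∀ a ∈ F, ∀ b ∈ F, a ≠ b → P.totalSpread a ≤ P.totalSpread b →
      29 / 25 * P.totalSpread a ≤ P.totalSpread b := fun a ha b hb hab hle =>
    (hcell a ha b hb).mul_totalSpread_le hS (hF.isUnitTriangle a ha) (hF.isUnitTriangle b hb)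
      (hF.crossDet_ne_zero ha hb hab) (hlarge a ha) hle
  have hwindow {E : Finset (Fin 3 → K)} {c : ℝ} (hE : E ⊆ F) (hc : 0 < c)
      (hmin : ∀ a ∈ E, c ≤ P.totalSpread a) (hmax : ∀ a ∈ E, P.totalSpread a < 20 * c) :
      E.card ≤ 21 := by
    refine card_le_of_mul_le (r := 29 / 25) (by norm_num) hmin (fun a ha => ?_)
      fun a ha b hb => hgap a (hE ha) b (hE hb)
    exact (hmax a ha).trans (mul_lt_mul_of_pos_right (by norm_num : (20 : ℝ) < (29 / 25) ^ 21) hc)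
  have hΛ := P.errorTerm_pos
  have hsmall : (F.filter fun a => P.totalSpread a < 145 * P.errorTerm).card ≤ 21 :=
    hwindow (Finset.filter_subset _ _) (by positivity)
      (fun a ha => hlarge a (Finset.mem_filter.mp ha).1)
      fun a ha => (Finset.mem_filter.mp ha).2.trans_eq (by ring)
  have hbig : (F.filter fun a => ¬ P.totalSpread a < 145 * P.errorTerm).card ≤ 21 := by
    rcases (F.filter fun a => ¬ P.totalSpread a < 145 * P.errorTerm).eq_empty_or_nonempty with
      hE | hE
    · exact (Finset.card_eq_zero.mpr hE).trans_le (Nat.zero_le _)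
    obtain ⟨a, ha, hmin⟩ := Finset.exists_min_image _ P.totalSpread hE
    obtain ⟨haF, ha145⟩ := Finset.mem_filter.mp ha
    rw [not_lt] at ha145
    refine hwindow (Finset.filter_subset _ _) (by linarith) hmin fun b hb => ?_
    have hbF := (Finset.mem_filter.mp hb).1
    exact (hcell a haF b hbF).totalSpread_lt hS (hF.isUnitTriangle a haF)
      (hF.isUnitTriangle b hbF) ha145
  rw [← Finset.card_filter_add_card_filter_not fun a => P.totalSpread a < 145 * P.errorTerm]
  lia

theorem sameCell (hF : P.IsTriangleSystem S F) {a b : Fin 3 → K} (ha : a ∈ F) (hb : b ∈ F)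
    (hshortest : ∀ w ∈ S, P.shortest a w = P.shortest b w)
    (hshare : ∀ w ∈ S,
      share (20 * S.card) (P.spread a) w = share (20 * S.card) (P.spread b) w) :
    P.SameCell S a b where
  shortest_eq := funext fun w => by
    by_cases hw : w ∈ S
    · exact hshortest w hw
    · simp only [shortest, hF.abv_side_eq a ha b hb w hw]
  spread_eq w hw := by simp only [spread, maxSide, minSide, hF.abv_side_eq a ha b hb w hw]
  share_eq := hshare

theorem card_le_of_large [CharZero K] (hF : P.IsTriangleSystem S F) (hS : S.Nonempty)
    (hlarge : ∀ a ∈ F, 29 / 4 * P.errorTerm ≤ P.totalSpread a) :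
    F.card ≤ 42 * 168 ^ S.card := by
  set shortestOn : (Fin 3 → K) → S → Fin 3 := fun a w => P.shortest a w
  set shareOn : (Fin 3 → K) → S → ℕ := fun a w => share (20 * S.card) (P.spread a) w
  have hfiber (c : (S → Fin 3) × (S → ℕ)) :
      (F.filter fun a => (shortestOn a, shareOn a) = c).card ≤ 42 := by
    refine card_le_of_sameCell (hF.mono (Finset.filter_subset _ _)) hS
      (fun a ha => hlarge a (Finset.mem_filter.mp ha).1) fun a ha b hb => ?_
    obtain ⟨haF, hac⟩ := Finset.mem_filter.mp ha
    obtain ⟨hbF, hbc⟩ := Finset.mem_filter.mp hb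
    obtain ⟨hshortest, hshare⟩ := Prod.ext_iff.mp (hac.trans hbc.symm)
    exact hF.sameCell haF hbF (fun w hw => congrFun hshortest ⟨w, hw⟩)
      fun w hw => congrFun hshare ⟨w, hw⟩
  have hshare : (F.image shareOn).card ≤ 56 ^ S.card := by
    rw [← Fintype.card_coe S]
    refine card_le_fiftySix_pow fun g hg => ?_
    obtain ⟨a, ha, rfl⟩ := Finset.mem_image.mp hg
    rw [Fintype.card_coe, Finset.sum_coe_sort S (share (20 * S.card) (P.spread a))]
    exact sum_share_le _ (spread_nonneg (hF.isUnitTriangle a ha).injective) S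
  have hcells : F.image (fun a => (shortestOn a, shareOn a)) ⊆
      Finset.univ ×ˢ F.image shareOn := fun c hc => by
    obtain ⟨a, ha, rfl⟩ := Finset.mem_image.mp hc
    exact Finset.mem_product.mpr ⟨Finset.mem_univ _, Finset.mem_image_of_mem _ ha⟩
  calc F.card ≤ 42 * (F.image fun a => (shortestOn a, shareOn a)).card :=
        Finset.card_le_mul_card_image _ _ fun c _ => hfiber c
    _ ≤ 42 * (3 ^ S.card * (F.image shareOn).card) := by
        refine Nat.mul_le_mul_left _ ((Finset.card_le_card hcells).trans_eq ?_)
        simp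
    _ ≤ 42 * (3 ^ S.card * 56 ^ S.card) := by gcongr
    _ = 42 * 168 ^ S.card := by norm_num [← mul_pow]

end IsTriangleSystem

end PlaceFamily

end LargeTriangles

section SmallTriangles

/-- The square of side `1 / n` containing `z`, in the square grid in the complex plane. -/
def gridCell (n : ℕ) (z : ℂ) : ℤ × ℤ := (⌊n * z.re⌋, ⌊n * z.im⌋)

theorem floor_natCast_mul_mem_Icc (n : ℕ) {t : ℝ} (ht : |t| ≤ 1) :
    ⌊n * t⌋ ∈ Finset.Icc (-(n : ℤ)) n := by
  obtain ⟨hlow, hhigh⟩ := abs_le.mp ht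
  have hn : (0 : ℝ) ≤ n := n.cast_nonneg
  rw [Finset.mem_Icc]
  constructor
  · rw [Int.le_floor]
    push_cast
    linarith [mul_le_mul_of_nonneg_left hlow hn]
  · exact_mod_cast (Int.floor_le (n * t)).trans (mul_le_of_le_one_right hn hhigh)

theorem gridCell_mem (n : ℕ) {z : ℂ} (hz : ‖z‖ ≤ 1) :
    gridCell n z ∈ Finset.Icc (-(n : ℤ)) n ×ˢ Finset.Icc (-(n : ℤ)) n :=
  Finset.mem_product.mpr
    ⟨floor_natCast_mul_mem_Icc n ((Complex.abs_re_le_norm z).trans hz),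
      floor_natCast_mul_mem_Icc n ((Complex.abs_im_le_norm z).trans hz)⟩

theorem sq_mul_norm_sub_sq_le_of_gridCell_eq {n : ℕ} {z z' : ℂ} (h : gridCell n z = gridCell n z') :
    n ^ 2 * ‖z - z'‖ ^ 2 ≤ 2 := by
  obtain ⟨hre, him⟩ := Prod.ext_iff.mp h
  have hre' := (abs_lt.mp (Int.abs_sub_lt_one_of_floor_eq_floor hre))
  have him' := (abs_lt.mp (Int.abs_sub_lt_one_of_floor_eq_floor him))
  rw [← Complex.normSq_eq_norm_sq, Complex.normSq_apply, Complex.sub_re, Complex.sub_im]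
  nlinarith

/-- The cell of the point `[x : y]` in a subdivision of the complex projective line: a grid in each
of the two closed unit discs, with coordinates `y / x` and `x / y`. -/
def sphereCell (n : ℕ) (x y : ℂ) : Bool × ℤ × ℤ :=
  if ‖y‖ ≤ ‖x‖ then (true, gridCell n (y / x)) else (false, gridCell n (x / y))

/-- The values taken by `sphereCell n`. -/
def sphereCells (n : ℕ) : Finset (Bool × ℤ × ℤ) :=
  Finset.univ ×ˢ Finset.Icc (-(n : ℤ)) n ×ˢ Finset.Icc (-(n : ℤ)) n

theorem card_sphereCells (n : ℕ) : (sphereCells n).card = 2 * (2 * n + 1) ^ 2 := by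
  have h : (n + 1 + n : ℤ).toNat = 2 * n + 1 := by lia
  simp [sphereCells, h, sq]

theorem sphereCell_mem (n : ℕ) (x y : ℂ) : sphereCell n x y ∈ sphereCells n := by
  refine Finset.mem_product.mpr ⟨Finset.mem_univ _, ?_⟩
  unfold sphereCell
  split_ifs with h
  · exact gridCell_mem n (norm_div y x ▸ div_le_one_of_le₀ h (norm_nonneg x))
  · exact gridCell_mem n (norm_div x y ▸ div_le_one_of_le₀ (not_le.mp h).le (norm_nonneg y))

theorem sq_mul_norm_sub_sq_le_of_gridCell_div_eq {n : ℕ} {x y x' y' : ℂ} (hxy : ‖y‖ ≤ ‖x‖)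
    (hxy' : ‖y'‖ ≤ ‖x'‖) (h : gridCell n (y / x) = gridCell n (y' / x')) :
    n ^ 2 * ‖x * y' - y * x'‖ ^ 2 ≤ 2 * (‖x‖ * ‖x'‖) ^ 2 := by
  have hy : y / x * x = y := div_mul_cancel_of_imp fun hx => by simpa [hx] using hxy
  have hy' : y' / x' * x' = y' := div_mul_cancel_of_imp fun hx => by simpa [hx] using hxy'
  have hdet : y * x' - x * y' = (y / x - y' / x') * (x * x') := by
    linear_combination -x' * hy + x * hy'
  rw [norm_sub_rev, hdet, norm_mul, norm_mul, mul_pow, ← mul_assoc]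
  exact mul_le_mul_of_nonneg_right (sq_mul_norm_sub_sq_le_of_gridCell_eq h) (by positivity)

theorem sq_mul_norm_sub_sq_le_of_sphereCell_eq {n : ℕ} {x y x' y' : ℂ}
    (h : sphereCell n x y = sphereCell n x' y') :
    n ^ 2 * ‖x * y' - y * x'‖ ^ 2 ≤ 2 * (max ‖x‖ ‖y‖ * max ‖x'‖ ‖y'‖) ^ 2 := by
  unfold sphereCell at h
  split_ifs at h with hxy hxy' hxy'
  · rw [max_eq_left hxy, max_eq_left hxy']
    exact sq_mul_norm_sub_sq_le_of_gridCell_div_eq hxy hxy' (Prod.ext_iff.mp h).2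
  · cases (Prod.ext_iff.mp h).1
  · cases (Prod.ext_iff.mp h).1
  · rw [not_le] at hxy hxy'
    rw [max_eq_right hxy.le, max_eq_right hxy'.le, norm_sub_rev]
    exact sq_mul_norm_sub_sq_le_of_gridCell_div_eq hxy.le hxy'.le (Prod.ext_iff.mp h).2

namespace PlaceFamily

variable {K W : Type*} [Field K] [Fintype W] (P : PlaceFamily K W)

/-- The cells of the first two sides of a triangle at the archimedean places. -/
def archCell (n : ℕ) (a : Fin 3 → K) (w : {w // w ∈ P.arch}) : Bool × ℤ × ℤ :=
  sphereCell n (P.embedding w (side a 0)) (P.embedding w (side a 1))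

variable {P} {a b : Fin 3 → K}

theorem archCell_mem (n : ℕ) (a : Fin 3 → K) :
    P.archCell n a ∈ Fintype.piFinset fun _ => sphereCells n :=
  Fintype.mem_piFinset.mpr fun _ => sphereCell_mem n _ _

theorem max_norm_embedding_le_maxSide (a : Fin 3 → K) (w : {w // w ∈ P.arch}) :
    max ‖P.embedding w (side a 0)‖ ‖P.embedding w (side a 1)‖ ≤ maxSide (P.abv w) a := by
  simp only [← P.abv_eq_norm_embedding]
  exact max_le (apply_side_le_maxSide _ _ _) (apply_side_le_maxSide _ _ _)

theorem triangleConst_pow_mul_sq_abv_crossDet_le (h : P.archCell 64 a = P.archCell 64 b) (w : W) :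
    P.triangleConst w ^ 11 * P.abv w (crossDet (side a) (side b)) ^ 2 ≤
      (maxSide (P.abv w) a * maxSide (P.abv w) b) ^ 2 := by
  unfold triangleConst
  split_ifs with hw
  · have hcell := sq_mul_norm_sub_sq_le_of_sphereCell_eq (congrFun h ⟨w, hw⟩)
    simp only [← map_mul, ← map_sub] at hcell
    rw [← P.abv_eq_norm_embedding ⟨w, hw⟩] at hcell
    have hmax : _ ≤ (maxSide (P.abv w) a * maxSide (P.abv w) b) ^ 2 := pow_le_pow_left₀
      (by positivity) (mul_le_mul (max_norm_embedding_le_maxSide a ⟨w, hw⟩)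
        (max_norm_embedding_le_maxSide b ⟨w, hw⟩) (by positivity) (maxSide_nonneg _ a)) 2
    unfold crossDet
    norm_num at hcell ⊢
    linarith
  · rw [one_pow, one_mul]
    refine pow_le_pow_left₀ (AbsoluteValue.nonneg _ _) ?_ 2
    have hprod (i j : Fin 3) : P.abv w (side a i * side b j) ≤
        maxSide (P.abv w) a * maxSide (P.abv w) b := by
      rw [map_mul]
      exact mul_le_mul (apply_side_le_maxSide _ _ _) (apply_side_le_maxSide _ _ _)
        (AbsoluteValue.nonneg _ _) (maxSide_nonneg _ a)
    rw [crossDet, sub_eq_add_neg]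
    refine (P.isNonarchimedean w hw _ _).trans (max_le (hprod 0 1) ?_)
    rw [AbsoluteValue.map_neg]
    exact hprod 1 0

theorem errorTerm_le_height_add_height (ha : IsUnitTriangle P.integers a)
    (hb : IsUnitTriangle P.integers b) (hdet : crossDet (side a) (side b) ≠ 0)
    (h : P.archCell 64 a = P.archCell 64 b) :
    11 / 2 * P.errorTerm ≤ P.height a + P.height b := by
  have hmem : crossDet (side a) (side b) ∈ P.integers :=
    sub_mem (mul_mem (ha.side_mem _) (hb.side_mem _)) (mul_mem (ha.side_mem _) (hb.side_mem _))
  have hlocal (w : W) : 11 / 2 * Real.log (P.triangleConst w) +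
      Real.log (P.abv w (crossDet (side a) (side b))) ≤
      Real.log (maxSide (P.abv w) a) + Real.log (maxSide (P.abv w) b) := by
    have hA : 0 < P.triangleConst w := zero_lt_one.trans_le (P.hasTriangleConst w).one_le
    have hD := (P.abv w).pos hdet
    have hM := maxSide_pos (P.abv w) ha.injective
    have hM' := maxSide_pos (P.abv w) hb.injective
    have hlog := Real.log_le_log (by positivity) (triangleConst_pow_mul_sq_abv_crossDet_le h w)
    rw [Real.log_mul (by positivity) (by positivity), Real.log_pow, Real.log_pow, Real.log_pow,
      Real.log_mul hM.ne' hM'.ne'] at hlog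
    push_cast at hlog
    linarith
  refine (le_add_of_nonneg_right (P.sum_log_nonneg _ hmem hdet)).trans ?_
  simp only [height, errorTerm, Finset.mul_sum, ← Finset.sum_add_distrib]
  refine Finset.sum_le_sum fun w _ => ?_
  linarith [mul_le_mul_of_nonneg_left (hlocal w) (P.weight_pos w).le]

namespace IsTriangleSystem

variable {S : Finset W} {F : Finset (Fin 3 → K)}

theorem card_le_of_height_lt (hF : P.IsTriangleSystem S F)
    (hsmall : ∀ a ∈ F, P.height a < 11 / 4 * P.errorTerm) : F.card ≤ 33282 ^ P.arch.card := by
  have hmaps : Set.MapsTo (P.archCell 64) F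
      (Fintype.piFinset fun _ : {w // w ∈ P.arch} => sphereCells 64) :=
    fun a _ => archCell_mem 64 a
  have hinj : Set.InjOn (P.archCell 64) F := fun a ha b hb hab => by
    by_contra hne
    linarith [hsmall a ha, hsmall b hb, errorTerm_le_height_add_height (hF.isUnitTriangle a ha)
      (hF.isUnitTriangle b hb) (hF.crossDet_ne_zero ha hb hne) hab]
  simpa [card_sphereCells] using Finset.card_le_card_of_injOn _ hmaps hinj

theorem card_le [CharZero K] (hF : P.IsTriangleSystem S F) (hS : P.arch ⊆ S) :
    F.card ≤ 2 ^ (16 * S.card) := by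
  have hS' : S.Nonempty := P.arch_nonempty.mono hS
  have hsmall : (F.filter fun a => P.height a < 11 / 4 * P.errorTerm).card ≤ 33282 ^ S.card :=
    (card_le_of_height_lt (hF.mono (Finset.filter_subset _ _))
      fun a ha => (Finset.mem_filter.mp ha).2).trans
        (Nat.pow_le_pow_right (by norm_num) (Finset.card_le_card hS))
  have hlarge : (F.filter fun a => ¬ P.height a < 11 / 4 * P.errorTerm).card ≤
      42 * 168 ^ S.card := by
    refine card_le_of_large (hF.mono (Finset.filter_subset _ _)) hS' fun a ha => ?_
    obtain ⟨haF, hheight⟩ := Finset.mem_filter.mp ha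
    linarith [three_mul_height_le (hF.isUnitTriangle a haF)]
  obtain ⟨s, hs⟩ := Nat.exists_eq_add_one.mpr hS'.card_pos
  have hpow : 33282 ^ s ≤ 65536 ^ s := Nat.pow_le_pow_left (by norm_num) s
  have hpow' : 168 ^ s ≤ 65536 ^ s := Nat.pow_le_pow_left (by norm_num) s
  rw [← Finset.card_filter_add_card_filter_not fun a => P.height a < 11 / 4 * P.errorTerm]
  rw [hs, pow_succ] at hsmall hlarge
  rw [hs, pow_mul, pow_succ]
  lia

theorem finite_and_ncard_le [CharZero K] {F : Set (Fin 3 → K)} (hF : P.IsTriangleSystem S F)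
    (hS : P.arch ⊆ S) : F.Finite ∧ F.ncard ≤ 2 ^ (16 * S.card) := by
  rw [← Set.encard_le_coe_iff_finite_ncard_le]
  by_contra! hlt
  obtain ⟨G, hGF, hG⟩ := Set.exists_subset_encard_eq (Order.add_one_le_of_lt hlt)
  lift G to Finset (Fin 3 → K) using Set.finite_of_encard_eq_coe hG
  have hcard := (hF.mono hGF).card_le hS
  rw [Set.encard_coe_eq_coe_finsetCard] at hG
  have hG' : G.card = 2 ^ (16 * S.card) + 1 := by exact_mod_cast hG
  lia

end IsTriangleSystem

end PlaceFamily

end SmallTriangles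

section NumberField

theorem infinite_heightOneSpectrum (R : Type*) [CommRing R] [CharZero R] [Algebra.IsIntegral ℤ R] :
    Infinite (HeightOneSpectrum R) := by
  have hover (p : Nat.Primes) : ∃ v : HeightOneSpectrum R, (p : R) ∈ v.asIdeal := by
    have hp := Nat.prime_iff_prime_int.mp p.2
    have hmax : (Ideal.span {(p : ℤ)}).IsMaximal :=
      ((Ideal.span_singleton_prime hp.ne_zero).mpr hp).isMaximal (by simpa using hp.ne_zero)
    obtain ⟨M, hM, hMp⟩ :=
      Ideal.exists_maximal_ideal_liesOver_of_isIntegral (S := R) (Ideal.span {(p : ℤ)})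
    have hpM : (p : R) ∈ M := by
      simpa using (Ideal.mem_of_liesOver M (Ideal.span {(p : ℤ)}) (p : ℤ)).mp
        (Ideal.mem_span_singleton_self _)
    refine ⟨⟨M, hM.isPrime, fun hbot => ?_⟩, hpM⟩
    rw [hbot, Ideal.mem_bot] at hpM
    exact p.2.ne_zero (by exact_mod_cast hpM)
  choose v hv using hover
  refine Infinite.of_injective v fun p q hpq => ?_
  by_contra hne
  have hcop : IsCoprime ((p : ℕ) : R) (q : ℕ) := ((Nat.coprime_primes p.2 q.2).mpr
    fun h => hne (Subtype.ext h)).cast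
  obtain ⟨x, y, hxy⟩ := hcop
  refine (v p).isPrime.ne_top ((Ideal.eq_top_iff_one _).mpr (hxy ▸ ?_))
  exact add_mem (Ideal.mul_mem_left _ _ (hv p)) (Ideal.mul_mem_left _ _ (hpq ▸ hv q))

open NumberField.HeightOneSpectrum (adicAbv)

variable {K : Type*} [Field K]

/-- The triangle with side vector `(z, 1 - z, -1)`. -/
def triangle (z : K) : Fin 3 → K := ![z - 1, z, 0]

theorem side_triangle (z : K) : side (triangle z) = ![z, 1 - z, -1] := by
  funext i
  fin_cases i <;> simp [side, triangle]

theorem crossDet_side_triangle (z z' : K) :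
    crossDet (side (triangle z)) (side (triangle z')) = z - z' := by
  simp only [crossDet, side_triangle, Matrix.cons_val]
  ring

variable [NumberField K]

theorem adicAbv_le_one_iff {v : HeightOneSpectrum (𝓞 K)} {x : K} :
    adicAbv K v x ≤ 1 ↔ v.valuation K x ≤ 1 :=
  WithZeroMulInt.toNNReal_le_one_iff (NumberField.HeightOneSpectrum.one_lt_absNorm_nnreal v)

theorem adicAbv_symm_equivHeightOneSpectrum (v : HeightOneSpectrum (𝓞 K)) (x : K) :
    FinitePlace.equivHeightOneSpectrum.symm v x = adicAbv K v x := by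
  rw [FinitePlace.equivHeightOneSpectrum_symm_apply, FinitePlace.norm_embedding]

theorem finite_setOf_adicAbv_ne_one {x : K} (hx : x ≠ 0) :
    {v : HeightOneSpectrum (𝓞 K) | adicAbv K v x ≠ 1}.Finite := by
  simp only [← adicAbv_symm_equivHeightOneSpectrum]
  exact (FinitePlace.hasFiniteMulSupport hx).preimage
    FinitePlace.equivHeightOneSpectrum.symm.injective.injOn

theorem one_le_prod_mul_prod_adicAbv (U : Finset (HeightOneSpectrum (𝓞 K))) {x : K} (hx : x ≠ 0)
    (hU : ∀ v ∉ U, adicAbv K v x ≤ 1) :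
    1 ≤ (∏ w : InfinitePlace K, w x ^ w.mult) * ∏ v ∈ U, adicAbv K v x := by
  set V := U ∪ (finite_setOf_adicAbv_ne_one hx).toFinset
  have hprod : (∏ w : InfinitePlace K, w x ^ w.mult) * ∏ v ∈ V, adicAbv K v x = 1 := by
    rw [← prod_abs_eq_one hx, ← finprod_comp_equiv FinitePlace.equivHeightOneSpectrum.symm]
    simp only [adicAbv_symm_equivHeightOneSpectrum]
    rw [finprod_eq_prod_of_mulSupport_subset]
    intro v hv
    exact Finset.mem_union_right _ ((Set.Finite.mem_toFinset _).mpr hv)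
  rw [← hprod]
  refine mul_le_mul_of_nonneg_left ?_ (Finset.prod_nonneg fun w _ => pow_nonneg (w.1.nonneg x) _)
  rw [← Finset.prod_sdiff (Finset.subset_union_left : U ⊆ V)]
  exact mul_le_of_le_one_left (Finset.prod_nonneg fun v _ => (adicAbv K v).nonneg x)
    (Finset.prod_le_one (fun v _ => (adicAbv K v).nonneg x)
      fun v hv => hU v (Finset.mem_sdiff.mp hv).2)

theorem sum_mult_mul_log_add_sum_log_adicAbv_nonneg (U : Finset (HeightOneSpectrum (𝓞 K))) {x : K}
    (hx : x ≠ 0) (hU : ∀ v ∉ U, adicAbv K v x ≤ 1) :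
    0 ≤ ∑ w : InfinitePlace K, w.mult * Real.log (w x) + ∑ v ∈ U, Real.log (adicAbv K v x) := by
  have hinf (w : InfinitePlace K) : w x ^ w.mult ≠ 0 := pow_ne_zero _ (w.1.ne_zero hx)
  have hfin (v : HeightOneSpectrum (𝓞 K)) : adicAbv K v x ≠ 0 := (adicAbv K v).ne_zero hx
  simp_rw [← Real.log_pow]
  rw [← Real.log_prod fun w _ => hinf w, ← Real.log_prod fun v _ => hfin v, ← Real.log_mul
    (Finset.prod_ne_zero_iff.mpr fun w _ => hinf w) (Finset.prod_ne_zero_iff.mpr fun v _ => hfin v)]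
  exact Real.log_nonneg (one_le_prod_mul_prod_adicAbv U hx hU)

/-- The archimedean places of a number field, the finite places in `U`, and the ring of elements
integral outside `U`. -/
def numberFieldPlaces (U : Finset (HeightOneSpectrum (𝓞 K))) :
    PlaceFamily K (InfinitePlace K ⊕ {v // v ∈ U}) where
  abv := Sum.elim (fun w => w.1) fun v => adicAbv K v.1
  weight := Sum.elim (fun w => w.mult) 1
  weight_pos := by
    rintro (w | _)
    · exact Nat.cast_pos.mpr w.mult_pos
    · exact one_pos
  arch := Finset.univ.disjSum ∅
  arch_nonempty := ⟨.inl (Classical.arbitrary _), by simp⟩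
  embedding
    | ⟨.inl w, _⟩ => w.embedding
    | ⟨.inr _, h⟩ => absurd h (by simp)
  abv_eq_norm_embedding := by
    rintro ⟨w | v, h⟩ x
    · exact (InfinitePlace.norm_embedding_eq w x).symm
    · exact absurd h (by simp)
  isNonarchimedean := by
    rintro (w | v) h
    · exact absurd h (by simp)
    · exact NumberField.HeightOneSpectrum.isNonarchimedean_adicAbv K v.1
  integers := (Set.integer (U : Set (HeightOneSpectrum (𝓞 K))) K).toSubring
  sum_log_nonneg x hx hx0 := by
    rw [Fintype.sum_sum_type]
    simp only [Sum.elim_inl, Sum.elim_inr, Pi.one_apply, one_mul]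
    rw [Finset.sum_coe_sort U fun v => Real.log (adicAbv K v x)]
    exact sum_mult_mul_log_add_sum_log_adicAbv_nonneg U hx0
      fun v hv => adicAbv_le_one_iff.mpr (hx v hv)

theorem mem_integers_numberFieldPlaces {U : Finset (HeightOneSpectrum (𝓞 K))} {x : K} :
    x ∈ (numberFieldPlaces U).integers ↔ ∀ v ∉ U, adicAbv K v x ≤ 1 :=
  forall₂_congr fun _ _ => adicAbv_le_one_iff.symm

theorem isUnitTriangle_triangle {U : Finset (HeightOneSpectrum (𝓞 K))} {z : K} (h0 : z ≠ 0)
    (h1 : z ≠ 1) (hU : ∀ v ∉ U, adicAbv K v z = 1 ∧ adicAbv K v (1 - z) = 1) :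
    IsUnitTriangle (numberFieldPlaces U).integers (triangle z) where
  side_ne_zero i := by
    fin_cases i <;> simp [side_triangle, h0, sub_ne_zero.mpr h1.symm]
  side_mem i := mem_integers_numberFieldPlaces.mpr fun v hv => by
    fin_cases i <;> simp [side_triangle, hU v hv]
  inv_side_mem i := mem_integers_numberFieldPlaces.mpr fun v hv => by
    fin_cases i <;> simp [side_triangle, hU v hv]

theorem isTriangleSystem_image_triangle {T U : Finset (HeightOneSpectrum (𝓞 K))} {Z : Set K}
    (h0 : 0 ∉ Z) (h1 : 1 ∉ Z)
    (hT : ∀ z ∈ Z, ∀ z' ∈ Z, ∀ v ∉ T,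
      adicAbv K v z = adicAbv K v z' ∧ adicAbv K v (1 - z) = adicAbv K v (1 - z'))
    (hU : ∀ z ∈ Z, ∀ v ∉ U, adicAbv K v z = 1 ∧ adicAbv K v (1 - z) = 1) :
    (numberFieldPlaces U).IsTriangleSystem (Finset.univ.disjSum (T.subtype (· ∈ U)))
      (triangle '' Z) where
  isUnitTriangle := by
    rintro _ ⟨z, hz, rfl⟩
    exact isUnitTriangle_triangle (ne_of_mem_of_not_mem hz h0) (ne_of_mem_of_not_mem hz h1)
      (hU z hz)
  abv_side_eq := by
    rintro _ ⟨z, hz, rfl⟩ _ ⟨z', hz', rfl⟩ (w | v) hv i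
    · simp at hv
    · have := hT z hz z' hz' v.1 (by simpa using hv)
      fin_cases i <;> simp [side_triangle, numberFieldPlaces, this]
  crossDet_ne_zero := by
    rintro _ ⟨z, _, rfl⟩ _ ⟨z', _, rfl⟩ hne
    rw [crossDet_side_triangle]
    exact sub_ne_zero.mpr fun h => hne (congrArg triangle h)

theorem finite_and_ncard_le_of_adicAbv_eq (T : Finset (HeightOneSpectrum (𝓞 K))) {Z : Set K}
    (h0 : 0 ∉ Z) (h1 : 1 ∉ Z)
    (hT : ∀ z ∈ Z, ∀ z' ∈ Z, ∀ v ∉ T,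
      adicAbv K v z = adicAbv K v z' ∧ adicAbv K v (1 - z) = adicAbv K v (1 - z')) :
    Z.Finite ∧ Z.ncard ≤ Bconst (sCard K T) := by
  obtain rfl | ⟨z₀, hz₀⟩ := Z.eq_empty_or_nonempty
  · simp
  have hz₁ : 1 - z₀ ≠ 0 := sub_ne_zero.mpr (ne_of_mem_of_not_mem hz₀ h1).symm
  let U := T ∪ ((finite_setOf_adicAbv_ne_one (ne_of_mem_of_not_mem hz₀ h0)).toFinset ∪
    (finite_setOf_adicAbv_ne_one hz₁).toFinset)
  have hU : ∀ z ∈ Z, ∀ v ∉ U, adicAbv K v z = 1 ∧ adicAbv K v (1 - z) = 1 := by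
    intro z hz v hv
    simp only [U, Finset.mem_union, Set.Finite.mem_toFinset, Set.mem_ofPred_eq, not_or,
      not_not] at hv
    exact (hT z hz z₀ hz₀ v hv.1).imp (·.trans hv.2.1) (·.trans hv.2.2)
  have hbound := (isTriangleSystem_image_triangle h0 h1 hT hU).finite_and_ncard_le
    (Finset.disjSum_mono_right _ (Finset.empty_subset _))
  have hinj : Function.Injective (triangle (K := K)) := fun z z' h => congrFun h 1
  have hcard : (Finset.univ.disjSum (T.subtype (· ∈ U)) :
      Finset (InfinitePlace K ⊕ {v // v ∈ U})).card = sCard K T := by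
    rw [Finset.card_disjSum, Finset.card_subtype, Finset.filter_true_of_mem
      fun v hv => Finset.mem_union_left _ hv, Finset.card_univ, sCard, add_comm]
  rw [hcard, Set.ncard_image_of_injective _ hinj, Set.finite_image_iff hinj.injOn] at hbound
  exact hbound

end NumberField

section Reduction

open NumberField.HeightOneSpectrum (adicAbv)

variable {K : Type*} [Field K]

/-- The determinant of the chosen homogeneous coordinates of two points of `ℙ¹(K)`. -/
def repDet (P Q : P1 K) : K := (Matrix.of ![P.rep, Q.rep]).det

theorem repDet_eq (P Q : P1 K) : repDet P Q = P.rep 0 * Q.rep 1 - P.rep 1 * Q.rep 0 :=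
  Matrix.det_fin_two (Matrix.of ![P.rep, Q.rep])

theorem repDet_ne_zero_iff {P Q : P1 K} : repDet P Q ≠ 0 ↔ P ≠ Q := by
  have hrep : Projectivization.rep ∘ ![P, Q] = (Matrix.of ![P.rep, Q.rep]).row := by
    funext i
    fin_cases i <;> rfl
  rw [repDet, ← isUnit_iff_ne_zero, ← Matrix.isUnit_iff_isUnit_det,
    ← Matrix.linearIndependent_rows_iff_isUnit, ← hrep, ← Projectivization.independent_iff,
    Projectivization.independent_pair_iff_ne]

/-- The `i`-th term of the Plücker relation between `P` and the points `Q 0`, `Q 1`, `Q 2`. -/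
def pluckerTerm (Q : Fin 3 → P1 K) (P : P1 K) (i : Fin 3) : K :=
  repDet P (Q i) * repDet (Q (i + 1)) (Q (i + 2))

theorem sum_pluckerTerm (Q : Fin 3 → P1 K) (P : P1 K) : ∑ i, pluckerTerm Q P i = 0 := by
  simp only [Fin.sum_univ_three, pluckerTerm, repDet_eq, Fin.isValue, Fin.reduceAdd]
  ring

/-- The affine coordinate on `ℙ¹` sending `Q 0`, `Q 1`, `Q 2` to `0`, `1`, `∞`. -/
def crossRatio (Q : Fin 3 → P1 K) (P : P1 K) : K := -(pluckerTerm Q P 0 / pluckerTerm Q P 2)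

theorem one_sub_crossRatio {Q : Fin 3 → P1 K} {P : P1 K} (h : pluckerTerm Q P 2 ≠ 0) :
    1 - crossRatio Q P = -(pluckerTerm Q P 1 / pluckerTerm Q P 2) := by
  have hsum := sum_pluckerTerm Q P
  rw [Fin.sum_univ_three] at hsum
  rw [crossRatio]
  field_simp
  linear_combination hsum

theorem pluckerTerm_ne_zero {Q : Fin 3 → P1 K} (hQ : Function.Injective Q) {P : P1 K} {i : Fin 3}
    (hP : P ≠ Q i) : pluckerTerm Q P i ≠ 0 :=
  mul_ne_zero (repDet_ne_zero_iff.mpr hP) (repDet_ne_zero_iff.mpr (hQ.ne (by simp)))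

theorem injOn_crossRatio {Q : Fin 3 → P1 K} (hQ : Function.Injective Q) :
    Set.InjOn (crossRatio Q) {Q 2}ᶜ := by
  intro P hP P' hP' h
  rw [crossRatio, crossRatio, neg_inj, div_eq_div_iff (pluckerTerm_ne_zero hQ hP)
    (pluckerTerm_ne_zero hQ hP')] at h
  have hQ' {i j : Fin 3} (hij : i ≠ j) : repDet (Q i) (Q j) ≠ 0 :=
    repDet_ne_zero_iff.mpr (hQ.ne hij)
  have hzero :
      repDet P P' * (repDet (Q 2) (Q 0) * repDet (Q 0) (Q 1) * repDet (Q 1) (Q 2)) = 0 := by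
    simp only [pluckerTerm, repDet_eq, Fin.isValue, Fin.reduceAdd] at h ⊢
    linear_combination -h
  by_contra hne
  exact mul_ne_zero (repDet_ne_zero_iff.mpr hne)
    (mul_ne_zero (mul_ne_zero (hQ' (by decide)) (hQ' (by decide))) (hQ' (by decide))) hzero

variable [NumberField K] {v : HeightOneSpectrum (𝓞 K)}

theorem valuation_eq_exp_neg_ordAt {x : K} (hx : x ≠ 0) :
    v.valuation K x = WithZero.exp (-ordAt v x) := by
  rw [ordAt, dif_neg hx, neg_neg, WithZero.exp, ofAdd_toAdd, WithZero.coe_unzero]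

theorem adicAbv_div_eq_of_ordAt_sub_eq {x y x' y' : K} (hx : x ≠ 0) (hy : y ≠ 0) (hx' : x' ≠ 0)
    (hy' : y' ≠ 0) (h : ordAt v x - ordAt v y = ordAt v x' - ordAt v y') :
    adicAbv K v (x / y) = adicAbv K v (x' / y') := by
  simp only [NumberField.HeightOneSpectrum.adicAbv_def, map_div₀ (v.valuation K),
    valuation_eq_exp_neg_ordAt, ne_eq, hx, hy, hx', hy', not_false_eq_true, ← WithZero.exp_sub]
  congr 3
  linarith

theorem ne_of_logDist_eq {P Q : P1 K} {n : ℤ} (h : logDist v P Q = n) : P ≠ Q := by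
  rintro rfl
  simp [logDist] at h

theorem ordAt_repDet_of_logDist_eq {P Q : P1 K} {n : ℤ} (h : logDist v P Q = n) :
    ordAt v (repDet P Q) =
      n + minOrd v (P.rep 0) (P.rep 1) + minOrd v (Q.rep 0) (Q.rep 1) := by
  rw [logDist, if_neg (ne_of_logDist_eq h), ← repDet_eq, WithTop.coe_inj] at h
  linarith

theorem adicAbv_pluckerTerm_div_eq {Q : Fin 3 → P1 K} {P P' : P1 K} {n : Fin 3 → ℤ}
    (hP : ∀ i, logDist v P (Q i) = n i) (hP' : ∀ i, logDist v P' (Q i) = n i) (i j : Fin 3) :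
    adicAbv K v (pluckerTerm Q P i / pluckerTerm Q P j) =
      adicAbv K v (pluckerTerm Q P' i / pluckerTerm Q P' j) := by
  have hne {R : P1 K} (hR : ∀ i, logDist v R (Q i) = n i) (i : Fin 3) : repDet R (Q i) ≠ 0 :=
    repDet_ne_zero_iff.mpr (ne_of_logDist_eq (hR i))
  simp only [pluckerTerm, mul_div_mul_comm, map_mul]
  rw [adicAbv_div_eq_of_ordAt_sub_eq (hne hP i) (hne hP j) (hne hP' i) (hne hP' j)]
  simp only [ordAt_repDet_of_logDist_eq (hP _), ordAt_repDet_of_logDist_eq (hP' _)]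
  ring

end Reduction

end
/-- **Three-Point Lemma B.** Given three distinct points `Q₁, Q₂, Q₃ ∈ ℙ¹(K)` and a fixed
choice of nonnegative integers `n_{i,𝔭}` for `i ∈ {1,2,3}` and `𝔭 ∉ S`, the set of points
`P ∈ ℙ¹(K)` with `δ_𝔭(P,Qᵢ) = n_{i,𝔭}` for each `i` and each `𝔭 ∉ S` has cardinality at most
`B(|S|) = 2^{16|S|}`. -/
theorem three_point_lemma_B
    {K : Type*} [Field K] [NumberField K]
    (T : Finset (HeightOneSpectrum (𝓞 K)))
    (Q : Fin 3 → P1 K) (hQ : Function.Injective Q)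
    (n : Fin 3 → HeightOneSpectrum (𝓞 K) → ℕ) :
    {P : P1 K | ∀ i : Fin 3, ∀ v ∉ T,
        logDist v P (Q i) = ((n i v : ℤ) : WithTop ℤ)}.Finite ∧
      {P : P1 K | ∀ i : Fin 3, ∀ v ∉ T,
        logDist v P (Q i) = ((n i v : ℤ) : WithTop ℤ)}.ncard ≤ Bconst (sCard K T) := by
  set E := {P : P1 K | ∀ i : Fin 3, ∀ v ∉ T, logDist v P (Q i) = ((n i v : ℤ) : WithTop ℤ)}
  obtain ⟨v₀, hv₀⟩ := (infinite_heightOneSpectrum (𝓞 K)).exists_notMem_finset T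
  have hne {P : P1 K} (hP : P ∈ E) (i : Fin 3) : P ≠ Q i := ne_of_logDist_eq (hP i v₀ hv₀)
  have hp {P : P1 K} (hP : P ∈ E) (i : Fin 3) : pluckerTerm Q P i ≠ 0 :=
    pluckerTerm_ne_zero hQ (hne hP i)
  have hinj : Set.InjOn (crossRatio Q) E := (injOn_crossRatio hQ).mono fun P hP => hne hP 2
  have h0 : 0 ∉ crossRatio Q '' E := by
    rintro ⟨P, hP, h⟩
    exact neg_ne_zero.mpr (div_ne_zero (hp hP 0) (hp hP 2)) h
  have h1 : 1 ∉ crossRatio Q '' E := by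
    rintro ⟨P, hP, h⟩
    exact neg_ne_zero.mpr (div_ne_zero (hp hP 1) (hp hP 2))
      (one_sub_crossRatio (hp hP 2) ▸ sub_eq_zero.mpr h.symm)
  rw [← Set.finite_image_iff hinj, ← hinj.ncard_image]
  refine finite_and_ncard_le_of_adicAbv_eq T h0 h1 ?_
  rintro _ ⟨P, hP, rfl⟩ _ ⟨P', hP', rfl⟩ v hv
  have hv' (i : Fin 3) := adicAbv_pluckerTerm_div_eq (hP · v hv) (hP' · v hv) i 2
  rw [one_sub_crossRatio (hp hP 2), one_sub_crossRatio (hp hP' 2)]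
  simp only [crossRatio, map_neg_eq_map, hv', and_self]
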